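/- Let n ≥ 2, m ≥ 1, and let Ω = ℝⁿ \ Ḡ, where G is a convex domain in ℝⁿ. If u = (u_1, …, u_m) is a vector-valued function with m bounded harmonic components in Ω, then for every point x ∈ Ω, max_{|ℓ|=1} |(ℓ, ∇)u(x)| ≤ (C_n / d_x) · sup_Ω |u|, where C_n = 4(n−1)^{(n−1)/2} ω_{n−1} / (n^{n/2} ω_n). -/

import Mathlib

open MeasureTheory Real Filter Metric
open scoped Real RealInnerProductSpace

noncomputable section

/-- `Eu n` is the Euclidean space `ℝⁿ`. -/
abbrev Eu (n : ℕ) := EuclideanSpace ℝ (Fin n)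

/-- `ω_n`: the surface area of the unit sphere `S^{n-1}` in `ℝⁿ`,
given by the classical formula `2 π^{n/2} / Γ(n/2)`. -/
def sphereArea (n : ℕ) : ℝ := 2 * π ^ ((n : ℝ) / 2) / Real.Gamma ((n : ℝ) / 2)

/-- A function is harmonic on a set: it is twice continuously differentiable
there and its Laplacian (the sum of the pure second partial derivatives in the
coordinate directions) vanishes at every point of the set. -/
def IsHarmonicOn {n : ℕ} (u : Eu n → ℝ) (Ω : Set (Eu n)) : Prop :=
  ContDiffOn ℝ 2 u Ω ∧ ∀ x ∈ Ω,
    ∑ i, fderiv ℝ (fun y => fderiv ℝ u y (EuclideanSpace.single i 1)) x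
      (EuclideanSpace.single i 1) = 0

/-- The constant `C_n = 4 (n-1)^{(n-1)/2} ω_{n-1} / (n^{n/2} ω_n)`. -/
def Cconst (n : ℕ) : ℝ :=
  4 * ((n : ℝ) - 1) ^ (((n : ℝ) - 1) / 2) * sphereArea (n - 1) /
    ((n : ℝ) ^ ((n : ℝ) / 2) * sphereArea n)

open scoped Topology

/-!
Let `p` be the point of `Ḡ` nearest to `x`. By convexity `Ω` contains the open half-space through
`p` with inner normal `(x - p) / |x - p|`, and `x` lies at distance `d_x` from its boundary, so it
suffices to bound the gradient in a half-space. By duality `u` may be taken scalar, and after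
pushing the hyperplane slightly inwards it is continuous up to the boundary. There `u` is the
Poisson integral of its boundary values, because the difference of the two is bounded, harmonic and
zero on the boundary. Differentiating the kernel and scaling,
`|(ℓ, ∇)u(x)| ≤ (M / d_x) ∫ |z|⁻ⁿ |⟨e, ℓ⟩ - n ⟨e, z⟩ ⟨ℓ, z⟩ / |z|²| / ∫ |z|⁻ⁿ`
with both integrals over the hyperplane `z ∈ e + e⊥`.

The numerator is largest for `ℓ = e`: up to a constant it is the Gaussian integral of the absolute
value of the zonal form on the whole space, and polarization writes the form for `(e, ℓ)` in terms
of those for `(a, a)` and `(b, b)` with `a = (e + ℓ) / 2` and `b = (e - ℓ) / 2`, where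
`|a|² + |b|² = 1`. For `ℓ = e` the integrand is radial and has an elementary primitive, which gives
`C_n`.
-/

section SecondDifferences

lemma hasDerivAt_add_smul {E : Type*} [NormedAddCommGroup E] [NormedSpace ℝ E] (x b : E) (s : ℝ) :
    HasDerivAt (fun s : ℝ => x + s • b) b s := by
  simpa using ((hasDerivAt_id s).smul_const b).const_add x

lemma tendsto_add_smul {E : Type*} [NormedAddCommGroup E] [NormedSpace ℝ E] (x b : E) :
    Tendsto (fun s : ℝ => x + s • b) (𝓝 0) (𝓝 x) := by
  simpa using (hasDerivAt_add_smul x b 0).continuousAt.tendsto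

lemma hasDerivAt_add_comp_neg {f f' : ℝ → ℝ} {s : ℝ} (hf : HasDerivAt f (f' s) s)
    (hf_neg : HasDerivAt f (f' (-s)) (-s)) :
    HasDerivAt (fun s => f s + f (-s)) (f' s - f' (-s)) s := by
  refine (hf.add (hf_neg.comp s (hasDerivAt_neg s))).congr_deriv ?_
  rw [mul_neg_one, ← sub_eq_add_neg]

lemma tendsto_second_difference_div_sq {f f' : ℝ → ℝ} {L : ℝ}
    (hf : ∀ᶠ s in 𝓝 0, HasDerivAt f (f' s) s) (hf' : HasDerivAt f' L 0) :
    Tendsto (fun h => (f h + f (-h) - 2 * f 0) / h ^ 2) (𝓝[≠] 0) (𝓝 L) := by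
  have tendsto_neg_zero : Tendsto (fun s : ℝ => -s) (𝓝 0) (𝓝 0) := by
    simpa using (continuous_neg (G := ℝ)).tendsto 0
  have deriv_numerator : ∀ᶠ s in 𝓝 0,
      HasDerivAt (fun h => f h + f (-h) - 2 * f 0) (f' s - f' (-s)) s := by
    filter_upwards [hf, tendsto_neg_zero.eventually hf] with s hs hs_neg
    exact (hasDerivAt_add_comp_neg hs hs_neg).sub_const _
  refine HasDerivAt.lhopital_zero_nhdsNE (f' := fun h => f' h - f' (-h)) (g' := fun h => 2 * h)
    (eventually_nhdsWithin_of_eventually_nhds deriv_numerator)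
    (.of_forall fun s => by simpa using hasDerivAt_pow 2 s) ?_ ?_ ?_ ?_
  · filter_upwards [self_mem_nhdsWithin] with s hs
    exact mul_ne_zero two_ne_zero hs
  · have := deriv_numerator.self_of_nhds.continuousAt.tendsto
    rw [show f 0 + f (-0) - 2 * f 0 = 0 by rw [neg_zero]; ring] at this
    exact this.mono_left nhdsWithin_le_nhds
  · have : Tendsto (fun h : ℝ => h ^ 2) (𝓝 0) (𝓝 (0 ^ 2)) := (continuous_pow 2).tendsto 0
    rw [zero_pow two_ne_zero] at this
    exact this.mono_left nhdsWithin_le_nhds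
  · have deriv_odd_part : HasDerivAt (fun h => (f' h - f' (-h)) / 2) L 0 := by
      have hf'_neg : HasDerivAt f' L (-0) := by rwa [neg_zero]
      refine ((hf'.sub (hf'_neg.comp 0 (hasDerivAt_neg 0))).div_const 2).congr_deriv ?_
      ring
    refine deriv_odd_part.tendsto_slope_zero.congr fun h => ?_
    rw [zero_add, neg_zero, sub_self, zero_div, sub_zero, smul_eq_mul, inv_mul_eq_div, div_div]

lemma abs_second_difference_le {f f' f'' : ℝ → ℝ} {h C : ℝ}
    (hf : ∀ s, |s| ≤ |h| → HasDerivAt f (f' s) s)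
    (hf' : ∀ s, |s| ≤ |h| → HasDerivAt f' (f'' s) s)
    (hC : ∀ s, |s| ≤ |h| → |f'' s| ≤ C) :
    |f h + f (-h) - 2 * f 0| ≤ C * h ^ 2 := by
  wlog h_nonneg : 0 ≤ h generalizing h
  · have := this (h := -h) (by simpa using hf) (by simpa using hf') (by simpa using hC)
      (by linarith)
    simpa [add_comm (f (-h))] using this
  rw [abs_of_nonneg h_nonneg] at hf hf' hC
  have deriv_le : ∀ s ∈ Set.Ico 0 h, ‖f' s - f' (-s)‖ ≤ C * (2 * s) := by
    intro s hs
    have := (convex_Icc (-h) h).norm_image_sub_le_of_norm_hasDerivWithin_le (x := -s) (y := s)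
      (fun x hx => (hf' x (abs_le.2 hx)).hasDerivWithinAt) (fun x hx => hC x (abs_le.2 hx))
      ⟨by linarith [hs.2], by linarith [hs.1]⟩ ⟨by linarith [hs.1], hs.2.le⟩
    rwa [sub_neg_eq_add, ← two_mul, Real.norm_of_nonneg (by linarith [hs.1] : 0 ≤ 2 * s)] at this
  have deriv_sum : ∀ s ∈ Set.Icc 0 h,
      HasDerivAt (fun s => f s + f (-s) - 2 * f 0) (f' s - f' (-s)) s := by
    intro s hs
    have hs_abs : |s| ≤ h := by rw [abs_of_nonneg hs.1]; exact hs.2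
    exact (hasDerivAt_add_comp_neg (hf s hs_abs) (hf (-s) (by rwa [abs_neg]))).sub_const _
  refine image_norm_le_of_norm_deriv_right_le_deriv_boundary
    (f := fun s => f s + f (-s) - 2 * f 0) (B := fun s => C * s ^ 2) (B' := fun s => C * (2 * s))
    (fun s hs => (deriv_sum s hs).continuousAt.continuousWithinAt)
    (fun s hs => (deriv_sum s (Set.Ico_subset_Icc_self hs)).hasDerivWithinAt)
    ?_ (fun s => ?_) deriv_le ⟨h_nonneg, le_rfl⟩
  · simp [two_mul]
  · simpa using (hasDerivAt_pow 2 s).const_mul C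

end SecondDifferences

section SymmLaplacian

variable {E : Type*} [NormedAddCommGroup E] [InnerProductSpace ℝ E] [FiniteDimensional ℝ E]

/-- `L` is the symmetric (Riemann) Laplacian of `v` at `x`: the limit of the sum of the symmetric
second difference quotients along an orthonormal basis. It satisfies the maximum principle, and for
a Poisson integral it can be computed without differentiating twice under the integral sign. -/
def HasSymmLaplacianAt (v : E → ℝ) (L : ℝ) (x : E) : Prop :=
  Tendsto (fun h : ℝ => ∑ i, (v (x + h • stdOrthonormalBasis ℝ E i)
      + v (x - h • stdOrthonormalBasis ℝ E i) - 2 * v x) / h ^ 2) (𝓝[≠] 0) (𝓝 L)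

namespace HasSymmLaplacianAt

variable {v w : E → ℝ} {L L' : ℝ} {x : E}

lemma sub (hv : HasSymmLaplacianAt v L x) (hw : HasSymmLaplacianAt w L' x) :
    HasSymmLaplacianAt (fun z => v z - w z) (L - L') x := by
  refine (Tendsto.sub hv hw).congr fun h => ?_
  rw [← Finset.sum_sub_distrib]
  exact Finset.sum_congr rfl fun i _ => by ring

lemma const_mul (hv : HasSymmLaplacianAt v L x) (c : ℝ) :
    HasSymmLaplacianAt (fun z => c * v z) (c * L) x := by
  refine (Tendsto.const_mul c hv).congr fun h => ?_
  rw [Finset.mul_sum]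
  exact Finset.sum_congr rfl fun i _ => by ring

lemma comp_add_right {a : E} (hv : HasSymmLaplacianAt v L (x + a)) :
    HasSymmLaplacianAt (fun z => v (z + a)) L x := by
  refine Tendsto.congr (fun h => Finset.sum_congr rfl fun i _ => ?_) hv
  simp only [add_right_comm, sub_add_eq_add_sub]

lemma of_second_difference_eq {c : E → ℝ}
    (hc : ∀ (h : ℝ) (b : E), v (x + h • b) + v (x - h • b) - 2 * v x = h ^ 2 * c b) :
    HasSymmLaplacianAt v (∑ i, c (stdOrthonormalBasis ℝ E i)) x := by
  refine Tendsto.congr' ?_ tendsto_const_nhds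
  filter_upwards [self_mem_nhdsWithin] with h hh
  refine Finset.sum_congr rfl fun i _ => ?_
  rw [hc, mul_div_cancel_left₀ _ (pow_ne_zero 2 hh)]

lemma nonpos_of_isLocalMax (hv : HasSymmLaplacianAt v L x) (hx : IsLocalMax v x) : L ≤ 0 := by
  have line_le : ∀ b : E, ∀ᶠ h : ℝ in 𝓝[≠] 0, v (x + h • b) ≤ v x := fun b =>
    eventually_nhdsWithin_of_eventually_nhds ((tendsto_add_smul x b).eventually hx)
  refine le_of_tendsto hv ?_
  filter_upwards [eventually_all.2 fun i => line_le (stdOrthonormalBasis ℝ E i),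
    eventually_all.2 fun i => line_le (-stdOrthonormalBasis ℝ E i)] with h h_add h_sub
  refine Finset.sum_nonpos fun i _ => div_nonpos_of_nonpos_of_nonneg ?_ (sq_nonneg h)
  have h_sub_i := h_sub i
  rw [smul_neg, ← sub_eq_add_neg] at h_sub_i
  linarith [h_add i]

end HasSymmLaplacianAt

lemma hasSymmLaplacianAt_laplacian {v : E → ℝ} {x : E} (hv : ContDiffAt ℝ 2 v x) :
    HasSymmLaplacianAt v (Laplacian.laplacian v x) x := by
  rw [InnerProductSpace.laplacian_eq_iteratedFDeriv_orthonormalBasis v (stdOrthonormalBasis ℝ E)]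
  refine tendsto_finsetSum _ fun i _ => ?_
  set b := stdOrthonormalBasis ℝ E i
  have hasDerivAt_line : ∀ᶠ s : ℝ in 𝓝 0,
      HasDerivAt (fun s : ℝ => v (x + s • b)) (fderiv ℝ v (x + s • b) b) s := by
    filter_upwards [(tendsto_add_smul x b).eventually (hv.eventually (by simp))] with s hs
    exact (hs.differentiableAt two_ne_zero).hasFDerivAt.comp_hasDerivAt s
      (hasDerivAt_add_smul x b s)
  have hasDerivAt_fderiv_line :
      HasDerivAt (fun s : ℝ => fderiv ℝ v (x + s • b) b) (fderiv ℝ (fderiv ℝ v) x b b) 0 := by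
    have : HasFDerivAt (fderiv ℝ v) (fderiv ℝ (fderiv ℝ v) x) (x + (0 : ℝ) • b) := by
      simpa using
        ((hv.fderiv_right (m := 1) (by norm_num)).differentiableAt one_ne_zero).hasFDerivAt
    exact (ContinuousLinearMap.apply ℝ ℝ b).hasFDerivAt.comp_hasDerivAt 0
      (this.comp_hasDerivAt 0 (hasDerivAt_add_smul x b 0))
  have := tendsto_second_difference_div_sq hasDerivAt_line hasDerivAt_fderiv_line
  simpa [iteratedFDeriv_two_apply, sub_eq_add_neg] using this

end SymmLaplacian

section MaximumPrinciple

variable {E : Type*} [NormedAddCommGroup E] [InnerProductSpace ℝ E]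

/-- Barrier for the slab `0 ≤ ⟪e, z⟫ ≤ T` and a function bounded by `B`: its Laplacian is `-2 δ`,
it is nonnegative on the face `⟪e, z⟫ = 0`, and it is at least `B` both on the face `⟪e, z⟫ = T`
and far out in the slab. -/
def slabBarrier (e : E) (B T δ : ℝ) (z : E) : ℝ :=
  B / T * ⟪e, z⟫
    + δ * (‖z‖ ^ 2 - (Module.finrank ℝ E + 1) * ⟪e, z⟫ ^ 2 + Module.finrank ℝ E * T ^ 2)

variable {e : E}

lemma slabBarrier_nonneg_of_inner_eq_zero {B T δ : ℝ} (hδ : 0 ≤ δ) {z : E} (hz : ⟪e, z⟫ = 0) :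
    0 ≤ slabBarrier e B T δ z := by
  rw [slabBarrier, hz, mul_zero, zero_add, zero_pow two_ne_zero, mul_zero, sub_zero]
  positivity

lemma le_slabBarrier_of_inner_eq {B T δ : ℝ} (he : ‖e‖ = 1) (hT : 0 < T) (hδ : 0 ≤ δ) {z : E}
    (hz : ⟪e, z⟫ = T) : B ≤ slabBarrier e B T δ z := by
  have hzT : T ^ 2 ≤ ‖z‖ ^ 2 :=
    pow_le_pow_left₀ hT.le (by simpa [he, hz] using real_inner_le_norm e z) 2
  calc B ≤ B + δ * (‖z‖ ^ 2 - T ^ 2) := le_add_of_nonneg_right (mul_nonneg hδ (sub_nonneg.2 hzT))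
    _ = slabBarrier e B T δ z := by rw [slabBarrier, hz, div_mul_cancel₀ _ hT.ne']; ring

lemma le_slabBarrier_of_le_norm_sq {B T δ : ℝ} (hB : 0 ≤ B) (hδ : 0 < δ) {z : E}
    (hz : ⟪e, z⟫ ∈ Set.Icc 0 T) (hz_far : T ^ 2 + B / δ ≤ ‖z‖ ^ 2) : B ≤ slabBarrier e B T δ z := by
  have hT : 0 ≤ T := hz.1.trans hz.2
  have inner_sq_le : (Module.finrank ℝ E + 1) * ⟪e, z⟫ ^ 2 ≤ (Module.finrank ℝ E + 1) * T ^ 2 := by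
    gcongr
    exacts [hz.1, hz.2]
  calc B = δ * (B / δ) := (mul_div_cancel₀ B hδ.ne').symm
    _ ≤ δ * (‖z‖ ^ 2 - (Module.finrank ℝ E + 1) * ⟪e, z⟫ ^ 2 + Module.finrank ℝ E * T ^ 2) := by
        gcongr
        linarith
    _ ≤ slabBarrier e B T δ z := le_add_of_nonneg_left (mul_nonneg (div_nonneg hB hT) hz.1)

variable [FiniteDimensional ℝ E]

lemma hasSymmLaplacianAt_slabBarrier (he : ‖e‖ = 1) (B T δ : ℝ) (z : E) :
    HasSymmLaplacianAt (slabBarrier e B T δ) (-2 * δ) z := by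
  have key := HasSymmLaplacianAt.of_second_difference_eq (v := slabBarrier e B T δ) (x := z)
    (c := fun b => δ * (2 * ‖b‖ ^ 2 - 2 * (Module.finrank ℝ E + 1) * ⟪e, b⟫ ^ 2)) fun h b => by
      simp only [slabBarrier, norm_add_sq_real, norm_sub_sq_real, inner_add_right, inner_sub_right,
        inner_smul_right, norm_smul, mul_pow, Real.norm_eq_abs, sq_abs]
      ring
  convert key using 1
  rw [← Finset.mul_sum, Finset.sum_sub_distrib, ← Finset.mul_sum, ← Finset.mul_sum,
    (stdOrthonormalBasis ℝ E).sum_sq_inner_left]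
  simp only [OrthonormalBasis.norm_eq_one, he, Finset.sum_const, Finset.card_univ, Fintype.card_fin,
    nsmul_eq_mul]
  ring

lemma nonpos_of_symmLaplacian_pos {S : Set E} (hS : IsCompact S) {f : E → ℝ}
    (hf : ContinuousOn f S) (hpos : ∀ z ∈ S, 0 < f z → S ∈ 𝓝 z ∧ ∃ L > 0, HasSymmLaplacianAt f L z)
    {z : E} (hz : z ∈ S) : f z ≤ 0 := by
  obtain ⟨x, hxS, hx_max⟩ := hS.exists_isMaxOn ⟨z, hz⟩ hf
  by_contra! hfz
  obtain ⟨hx_nhds, L, hL_pos, hL⟩ := hpos x hxS (hfz.trans_le (hx_max hz))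
  exact hL_pos.not_ge (hL.nonpos_of_isLocalMax (hx_max.isLocalMax hx_nhds))

lemma le_slabBarrier {D : E → ℝ} {B T δ : ℝ} (he : ‖e‖ = 1) (hB : 0 ≤ B) (hT : 0 < T) (hδ : 0 < δ)
    (hD_cont : ContinuousOn D {z | 0 ≤ ⟪e, z⟫})
    (hD_harm : ∀ z, 0 < ⟪e, z⟫ → HasSymmLaplacianAt D 0 z)
    (hD_le : ∀ z, 0 ≤ ⟪e, z⟫ → D z ≤ B) (hD_bdry : ∀ z, ⟪e, z⟫ = 0 → D z ≤ 0)
    {z : E} (hz : ⟪e, z⟫ ∈ Set.Icc 0 T) : D z ≤ slabBarrier e B T δ z := by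
  have inner_cont : Continuous fun y => ⟪e, y⟫ := by fun_prop
  have barrier_cont : Continuous (slabBarrier e B T δ) := by unfold slabBarrier; fun_prop
  set ρ := max ‖z‖ √(T ^ 2 + B / δ)
  set S : Set E := (fun y => ⟪e, y⟫) ⁻¹' Set.Icc 0 T ∩ closedBall 0 ρ
  have S_compact : IsCompact S :=
    (isCompact_closedBall _ _).inter_left (isClosed_Icc.preimage inner_cont)
  have hzS : z ∈ S := ⟨hz, mem_closedBall_zero_iff.2 (le_max_left _ _)⟩
  refine sub_nonpos.1 (nonpos_of_symmLaplacian_pos (f := fun y => D y - slabBarrier e B T δ y)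
    S_compact ((hD_cont.mono fun y hy => hy.1.1).sub barrier_cont.continuousOn) ?_ hzS)
  rintro y ⟨hy, -⟩ hy_pos
  have y_not_le {c : ℝ} (hc : D y ≤ c) : ¬ c ≤ slabBarrier e B T δ y :=
    fun h => hy_pos.not_ge (sub_nonpos.2 (hc.trans h))
  have hy₀ : 0 < ⟪e, y⟫ := hy.1.lt_of_ne' fun h =>
    y_not_le (hD_bdry y h) (slabBarrier_nonneg_of_inner_eq_zero hδ.le h)
  have hyT : ⟪e, y⟫ < T := hy.2.lt_of_ne fun h =>
    y_not_le (hD_le y hy.1) (le_slabBarrier_of_inner_eq he hT hδ.le h)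
  have hyρ : ‖y‖ < ρ := by
    by_contra! h
    refine y_not_le (hD_le y hy.1) (le_slabBarrier_of_le_norm_sq hB hδ hy ?_)
    exact (Real.sqrt_le_left (norm_nonneg y)).1 ((le_max_right _ _).trans h)
  exact ⟨inter_mem (inner_cont.continuousAt.preimage_mem_nhds (Icc_mem_nhds hy₀ hyT))
      (closedBall_mem_nhds_of_mem (mem_ball_zero_iff.2 hyρ)),
    0 - -2 * δ, by linarith, (hD_harm y hy₀).sub (hasSymmLaplacianAt_slabBarrier he _ _ _ y)⟩

lemma nonpos_on_halfSpace_of_bddAbove {D : E → ℝ} {B : ℝ} (he : ‖e‖ = 1)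
    (hD_cont : ContinuousOn D {z | 0 ≤ ⟪e, z⟫})
    (hD_harm : ∀ z, 0 < ⟪e, z⟫ → HasSymmLaplacianAt D 0 z)
    (hD_le : ∀ z, 0 ≤ ⟪e, z⟫ → D z ≤ B) (hD_bdry : ∀ z, ⟪e, z⟫ = 0 → D z ≤ 0)
    {z : E} (hz : 0 ≤ ⟪e, z⟫) : D z ≤ 0 := by
  wlog hB : 0 ≤ B generalizing B
  · exact this (B := 0) (fun y hy => (hD_le y hy).trans (not_le.1 hB).le) le_rfl
  have le_slope : ∀ T > 0, ⟪e, z⟫ ≤ T → D z ≤ B / T * ⟪e, z⟫ := by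
    intro T hT hzT
    have barrier_cont : Continuous fun δ => slabBarrier e B T δ z := by unfold slabBarrier; fun_prop
    have barrier_lim := (barrier_cont.tendsto 0).mono_left (nhdsWithin_le_nhds (s := Set.Ioi 0))
    rw [slabBarrier, zero_mul, add_zero] at barrier_lim
    refine ge_of_tendsto barrier_lim ?_
    filter_upwards [self_mem_nhdsWithin] with δ hδ
    exact le_slabBarrier he hB hT hδ hD_cont hD_harm hD_le hD_bdry ⟨hz, hzT⟩
  have slope_lim : Tendsto (fun T => B / T * ⟪e, z⟫) atTop (𝓝 0) := by
    simpa using (tendsto_const_nhds (x := B).div_atTop tendsto_id).mul_const ⟪e, z⟫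
  refine ge_of_tendsto slope_lim ?_
  filter_upwards [eventually_gt_atTop 0, eventually_ge_atTop ⟪e, z⟫] with T hT hzT
  exact le_slope T hT hzT

end MaximumPrinciple

section Kernel

variable {E : Type*} [NormedAddCommGroup E] [InnerProductSpace ℝ E]

/-- `‖z‖⁻ⁿ` with `n = dim E`, written as a power of `‖z‖²` so that it can be differentiated in even
and odd dimensions alike. -/
def invNormPow (z : E) : ℝ := (‖z‖ ^ 2) ^ (-(Module.finrank ℝ E : ℝ) / 2)

/-- The Poisson kernel of the half-space `0 < ⟪e, z⟫` without its normalising factor `2 / ω_n`. -/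
def halfSpaceKernel (e z : E) : ℝ := ⟪e, z⟫ * invNormPow z

/-- The form `⟪a, b⟫ - n ⟪a, z⟫ ⟪b, z⟫ / ‖z‖²`, homogeneous of degree `0` in `z`, through which the
derivative of the Poisson kernel with pole in the direction `a` depends on the direction `b`. -/
def zonalForm (a b z : E) : ℝ := ⟪a, b⟫ - Module.finrank ℝ E * ⟪a, z⟫ * ⟪b, z⟫ / ‖z‖ ^ 2

/-- The second derivative at `z` of `halfSpaceKernel e` along the line in direction `b`. -/
def halfSpaceKernelSecondDeriv (e b z : E) : ℝ :=
  Module.finrank ℝ E * invNormPow z / ‖z‖ ^ 2 * (-2 * ⟪e, b⟫ * ⟪b, z⟫ - ⟪e, z⟫ * ‖b‖ ^ 2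
    + (Module.finrank ℝ E + 2) * ⟪e, z⟫ * ⟪b, z⟫ ^ 2 / ‖z‖ ^ 2)

lemma invNormPow_nonneg (z : E) : 0 ≤ invNormPow z := by unfold invNormPow; positivity

lemma norm_invNormPow_mul_le {a M : ℝ} (ha : |a| ≤ M) (z : E) :
    ‖invNormPow z * a‖ ≤ invNormPow z * M := by
  rw [norm_mul, Real.norm_of_nonneg (invNormPow_nonneg z)]
  exact mul_le_mul_of_nonneg_left ha (invNormPow_nonneg z)

lemma invNormPow_smul {t : ℝ} (ht : 0 < t) (z : E) :
    invNormPow (t • z) = (t ^ Module.finrank ℝ E)⁻¹ * invNormPow z := by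
  have : (t ^ 2) ^ (-(Module.finrank ℝ E : ℝ) / 2) = (t ^ Module.finrank ℝ E)⁻¹ := by
    rw [← Real.rpow_natCast t 2, ← Real.rpow_mul ht.le, ← Real.rpow_natCast t,
      ← Real.rpow_neg ht.le]
    congr 1
    push_cast
    ring
  rw [invNormPow, invNormPow, norm_smul, Real.norm_of_nonneg ht.le, mul_pow,
    Real.mul_rpow (sq_nonneg t) (sq_nonneg _), this]

lemma invNormPow_le_of_half_norm_le {z w : E} (hz : z ≠ 0) (hzw : ‖z‖ / 2 ≤ ‖w‖) :
    invNormPow w ≤ 2 ^ Module.finrank ℝ E * invNormPow z := by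
  have norm_pos : 0 < ‖(2⁻¹ : ℝ) • z‖ := norm_pos_iff.2 (smul_ne_zero (by norm_num) hz)
  have norm_le : ‖(2⁻¹ : ℝ) • z‖ ≤ ‖w‖ := by
    rwa [norm_smul, norm_inv, Real.norm_two, inv_mul_eq_div]
  calc invNormPow w ≤ invNormPow ((2⁻¹ : ℝ) • z) :=
        Real.rpow_le_rpow_of_nonpos (by positivity) (by gcongr)
          (div_nonpos_of_nonpos_of_nonneg (neg_nonpos.2 (Nat.cast_nonneg _)) two_pos.le)
    _ = 2 ^ Module.finrank ℝ E * invNormPow z := by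
        rw [invNormPow_smul (by norm_num), inv_pow, inv_inv]

lemma zonalForm_smul {t : ℝ} (ht : t ≠ 0) (a b z : E) :
    zonalForm a b (t • z) = zonalForm a b z := by
  simp only [zonalForm, inner_smul_right, norm_smul, mul_pow, Real.norm_eq_abs, sq_abs]
  rw [show (Module.finrank ℝ E : ℝ) * (t * ⟪a, z⟫) * (t * ⟪b, z⟫)
    = t ^ 2 * (Module.finrank ℝ E * ⟪a, z⟫ * ⟪b, z⟫) by ring,
    mul_div_mul_left _ _ (pow_ne_zero 2 ht)]

lemma hasDerivAt_inner_add_smul (a z b : E) (s : ℝ) :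
    HasDerivAt (fun s : ℝ => ⟪a, z + s • b⟫) ⟪a, b⟫ s := by
  simpa using (hasDerivAt_const s a).inner ℝ (hasDerivAt_add_smul z b s)

lemma hasDerivAt_norm_sq_add_smul (z b : E) (s : ℝ) :
    HasDerivAt (fun s : ℝ => ‖z + s • b‖ ^ 2) (2 * ⟪b, z + s • b⟫) s := by
  simpa only [real_inner_comm b] using (hasDerivAt_add_smul z b s).norm_sq

lemma hasDerivAt_invNormPow_add_smul {z b : E} {s : ℝ} (hz : z + s • b ≠ 0) :
    HasDerivAt (fun s : ℝ => invNormPow (z + s • b))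
      (-Module.finrank ℝ E * invNormPow (z + s • b) * ⟪b, z + s • b⟫ / ‖z + s • b‖ ^ 2) s := by
  have norm_sq_ne : ‖z + s • b‖ ^ 2 ≠ 0 := by positivity
  refine ((hasDerivAt_norm_sq_add_smul z b s).rpow_const (Or.inl norm_sq_ne)).congr_deriv ?_
  rw [Real.rpow_sub_one norm_sq_ne, invNormPow]
  ring

lemma hasDerivAt_halfSpaceKernel_add_smul {e z b : E} {s : ℝ} (hz : z + s • b ≠ 0) :
    HasDerivAt (fun s : ℝ => halfSpaceKernel e (z + s • b))
      (invNormPow (z + s • b) * zonalForm e b (z + s • b)) s := by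
  refine ((hasDerivAt_inner_add_smul e z b s).mul
    (hasDerivAt_invNormPow_add_smul hz)).congr_deriv ?_
  unfold zonalForm
  ring

lemma hasDerivAt_deriv_halfSpaceKernel_add_smul {e z b : E} {s : ℝ} (hz : z + s • b ≠ 0) :
    HasDerivAt (fun s : ℝ => invNormPow (z + s • b) * zonalForm e b (z + s • b))
      (halfSpaceKernelSecondDeriv e b (z + s • b)) s := by
  have norm_ne : ‖z + s • b‖ ≠ 0 := norm_ne_zero_iff.2 hz
  have deriv_zonal := ((((hasDerivAt_inner_add_smul e z b s).const_mul (Module.finrank ℝ E : ℝ)).mul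
    (hasDerivAt_inner_add_smul b z b s)).div (hasDerivAt_norm_sq_add_smul z b s)
    (pow_ne_zero 2 norm_ne)).const_sub ⟪e, b⟫
  refine ((hasDerivAt_invNormPow_add_smul hz).mul deriv_zonal).congr_deriv ?_
  simp only [halfSpaceKernelSecondDeriv, Pi.mul_apply, Pi.div_apply, real_inner_self_eq_norm_sq]
  field_simp
  ring

lemma abs_zonalForm_le (a b z : E) :
    |zonalForm a b z| ≤ (1 + Module.finrank ℝ E) * (‖a‖ * ‖b‖) := by
  rcases eq_or_ne z 0 with rfl | hz
  · have : 0 ≤ Module.finrank ℝ E * (‖a‖ * ‖b‖) := by positivity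
    simpa [zonalForm, add_mul] using (abs_real_inner_le_norm a b).trans (by linarith)
  have : 0 < ‖z‖ := norm_pos_iff.2 hz
  calc |zonalForm a b z|
      ≤ |⟪a, b⟫| + Module.finrank ℝ E * |⟪a, z⟫| * |⟪b, z⟫| / ‖z‖ ^ 2 := by
        refine (abs_sub _ _).trans_eq ?_
        simp only [abs_div, abs_mul, abs_pow, abs_norm, Nat.abs_cast]
    _ ≤ ‖a‖ * ‖b‖ + Module.finrank ℝ E * (‖a‖ * ‖z‖) * (‖b‖ * ‖z‖) / ‖z‖ ^ 2 := by
        gcongr <;> exact abs_real_inner_le_norm _ _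
    _ = (1 + Module.finrank ℝ E) * (‖a‖ * ‖b‖) := by field_simp

lemma abs_halfSpaceKernelSecondDeriv_le {e b z : E} (he : ‖e‖ = 1) (hb : ‖b‖ = 1) (hz : z ≠ 0) :
    |halfSpaceKernelSecondDeriv e b z|
      ≤ Module.finrank ℝ E * (Module.finrank ℝ E + 5) * invNormPow z / ‖z‖ := by
  set N : ℝ := (Module.finrank ℝ E : ℝ)
  have : 0 < ‖z‖ := norm_pos_iff.2 hz
  have hR := invNormPow_nonneg z
  have heb : |⟪e, b⟫| ≤ 1 := by simpa [he, hb] using abs_real_inner_le_norm e b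
  have hez : |⟪e, z⟫| ≤ ‖z‖ := by simpa [he] using abs_real_inner_le_norm e z
  have hbz : |⟪b, z⟫| ≤ ‖z‖ := by simpa [hb] using abs_real_inner_le_norm b z
  have bracket_le : |-2 * ⟪e, b⟫ * ⟪b, z⟫ - ⟪e, z⟫ * ‖b‖ ^ 2
      + (N + 2) * ⟪e, z⟫ * ⟪b, z⟫ ^ 2 / ‖z‖ ^ 2| ≤ (N + 5) * ‖z‖ := calc
    _ ≤ 2 * |⟪e, b⟫| * |⟪b, z⟫| + |⟪e, z⟫| + (N + 2) * |⟪e, z⟫| * |⟪b, z⟫| ^ 2 / ‖z‖ ^ 2 := by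
        refine (abs_add_le _ _).trans ((add_le_add_left (abs_sub _ _) _).trans_eq ?_)
        have hN2 : |N + 2| = N + 2 := abs_of_nonneg (by positivity)
        simp only [hb, one_pow, mul_one, abs_div, abs_mul, abs_pow, abs_norm, abs_neg, abs_two, hN2]
    _ ≤ 2 * 1 * ‖z‖ + ‖z‖ + (N + 2) * ‖z‖ * ‖z‖ ^ 2 / ‖z‖ ^ 2 := by gcongr
    _ = (N + 5) * ‖z‖ := by field_simp; ring
  calc |halfSpaceKernelSecondDeriv e b z|
      ≤ N * invNormPow z / ‖z‖ ^ 2 * ((N + 5) * ‖z‖) := by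
        rw [halfSpaceKernelSecondDeriv, abs_mul, abs_of_nonneg (by positivity)]
        gcongr
    _ = N * (N + 5) * invNormPow z / ‖z‖ := by field_simp

lemma sum_halfSpaceKernelSecondDeriv_eq_zero [FiniteDimensional ℝ E] (e : E) {z : E} (hz : z ≠ 0) :
    ∑ i, halfSpaceKernelSecondDeriv e (stdOrthonormalBasis ℝ E i) z = 0 := by
  set N : ℝ := (Module.finrank ℝ E : ℝ) with hN
  set b := stdOrthonormalBasis ℝ E
  have hz_norm : ‖z‖ ≠ 0 := norm_ne_zero_iff.2 hz
  have sum_cross : ∑ i, -2 * ⟪e, b i⟫ * ⟪b i, z⟫ = -2 * ⟪e, z⟫ := by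
    simp only [← b.sum_inner_mul_inner e z, Finset.mul_sum, mul_assoc]
  have sum_normal : ∑ i, ⟪e, z⟫ * ‖b i‖ ^ 2 = N * ⟪e, z⟫ := by
    simp [b.norm_eq_one, hN]
  have sum_radial : ∑ i, (N + 2) * ⟪e, z⟫ * ⟪b i, z⟫ ^ 2 / ‖z‖ ^ 2 = (N + 2) * ⟪e, z⟫ := by
    rw [← Finset.sum_div, ← Finset.mul_sum, b.sum_sq_inner_right,
      mul_div_cancel_right₀ _ (pow_ne_zero 2 hz_norm)]
  unfold halfSpaceKernelSecondDeriv
  rw [← Finset.mul_sum, Finset.sum_add_distrib, Finset.sum_sub_distrib, sum_cross, sum_normal,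
    sum_radial]
  ring

lemma half_norm_le_norm_add_smul {z b : E} {s : ℝ} (hb : ‖b‖ = 1) (hs : |s| ≤ ‖z‖ / 2) :
    ‖z‖ / 2 ≤ ‖z + s • b‖ := by
  have := norm_le_add_norm_add z (s • b)
  rw [norm_smul, hb, mul_one, Real.norm_eq_abs] at this
  linarith

lemma add_smul_ne_zero {z b : E} {s : ℝ} (hb : ‖b‖ = 1) (hz : z ≠ 0) (hs : |s| ≤ ‖z‖ / 2) :
    z + s • b ≠ 0 :=
  norm_pos_iff.1 ((half_pos (norm_pos_iff.2 hz)).trans_le (half_norm_le_norm_add_smul hb hs))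

lemma abs_second_difference_halfSpaceKernel_le {e b z : E} {h : ℝ} (he : ‖e‖ = 1) (hb : ‖b‖ = 1)
    (hz : z ≠ 0) (hh : |h| ≤ ‖z‖ / 2) :
    |halfSpaceKernel e (z + h • b) + halfSpaceKernel e (z - h • b) - 2 * halfSpaceKernel e z|
      ≤ 2 ^ (Module.finrank ℝ E + 1) * (Module.finrank ℝ E * (Module.finrank ℝ E + 5))
        * invNormPow z / ‖z‖ * h ^ 2 := by
  have secondDeriv_le : ∀ s : ℝ, |s| ≤ |h| → |halfSpaceKernelSecondDeriv e b (z + s • b)|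
      ≤ 2 ^ (Module.finrank ℝ E + 1) * (Module.finrank ℝ E * (Module.finrank ℝ E + 5))
        * invNormPow z / ‖z‖ := fun s hs => by
    have : 0 < ‖z‖ := norm_pos_iff.2 hz
    have half_le := half_norm_le_norm_add_smul hb (hs.trans hh)
    calc |halfSpaceKernelSecondDeriv e b (z + s • b)|
        ≤ Module.finrank ℝ E * (Module.finrank ℝ E + 5) * invNormPow (z + s • b) / ‖z + s • b‖ :=
          abs_halfSpaceKernelSecondDeriv_le he hb (add_smul_ne_zero hb hz (hs.trans hh))
      _ ≤ Module.finrank ℝ E * (Module.finrank ℝ E + 5)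
          * (2 ^ Module.finrank ℝ E * invNormPow z) / (‖z‖ / 2) := by
          have := invNormPow_nonneg z
          gcongr
          exact invNormPow_le_of_half_norm_le hz half_le
      _ = _ := by rw [pow_succ]; field_simp
  simpa [sub_eq_add_neg] using abs_second_difference_le
    (fun s hs => hasDerivAt_halfSpaceKernel_add_smul (add_smul_ne_zero hb hz (hs.trans hh)))
    (fun s hs => hasDerivAt_deriv_halfSpaceKernel_add_smul
      (add_smul_ne_zero hb hz (hs.trans hh))) secondDeriv_le

lemma hasSymmLaplacianAt_halfSpaceKernel [FiniteDimensional ℝ E] (e : E) {z : E} (hz : z ≠ 0) :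
    HasSymmLaplacianAt (halfSpaceKernel e) 0 z := by
  rw [← sum_halfSpaceKernelSecondDeriv_eq_zero e hz]
  refine tendsto_finsetSum _ fun i _ => ?_
  set b := stdOrthonormalBasis ℝ E i
  have line_ne_zero : ∀ᶠ s : ℝ in 𝓝 0, z + s • b ≠ 0 :=
    (tendsto_add_smul z b).eventually (isOpen_ne.mem_nhds hz)
  simpa [sub_eq_add_neg] using tendsto_second_difference_div_sq
    (line_ne_zero.mono fun s hs => hasDerivAt_halfSpaceKernel_add_smul (e := e) hs)
    (hasDerivAt_deriv_halfSpaceKernel_add_smul line_ne_zero.self_of_nhds)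

section Measurability

variable [MeasurableSpace E] [BorelSpace E]

@[fun_prop]
lemma measurable_invNormPow : Measurable (invNormPow : E → ℝ) := by unfold invNormPow; fun_prop

@[fun_prop]
lemma measurable_zonalForm (a b : E) : Measurable (zonalForm a b) := by unfold zonalForm; fun_prop

@[fun_prop]
lemma measurable_halfSpaceKernel (e : E) : Measurable (halfSpaceKernel e) := by
  unfold halfSpaceKernel; fun_prop

end Measurability

end Kernel

section Hyperplane

variable {E : Type*} [NormedAddCommGroup E] [InnerProductSpace ℝ E] {e : E}

lemma inner_coe_orthogonal (y : (ℝ ∙ e)ᗮ) : ⟪e, (y : E)⟫ = 0 :=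
  Submodule.mem_orthogonal_singleton_iff_inner_right.1 y.2

lemma inner_smul_add_orthogonalProjectionOnto (he : ‖e‖ = 1) (z : E) :
    ⟪e, z⟫ • e + (ℝ ∙ e)ᗮ.orthogonalProjectionOnto z = z := by
  rw [← Submodule.starProjection_unit_singleton ℝ he,
    Submodule.coe_orthogonalProjectionOnto_apply,
    Submodule.starProjection_add_starProjection_orthogonal]

lemma norm_add_coe_sq (he : ‖e‖ = 1) (y : (ℝ ∙ e)ᗮ) : ‖e + (y : E)‖ ^ 2 = 1 + ‖y‖ ^ 2 := by
  rw [norm_add_sq_real, inner_coe_orthogonal, he, Submodule.coe_norm]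
  ring

lemma norm_smul_add_coe_sq (he : ‖e‖ = 1) (t : ℝ) (y : (ℝ ∙ e)ᗮ) :
    ‖t • (e + (y : E))‖ ^ 2 = (1 + ‖y‖ ^ 2) * t ^ 2 := by
  rw [norm_smul, mul_pow, norm_add_coe_sq he, Real.norm_eq_abs, sq_abs, mul_comm]

lemma sub_coe_orthogonalProjectionOnto_sub_smul (he : ‖e‖ = 1) (z : E) (y : (ℝ ∙ e)ᗮ) :
    z - ((ℝ ∙ e)ᗮ.orthogonalProjectionOnto z - ⟪e, z⟫ • y : (ℝ ∙ e)ᗮ) = ⟪e, z⟫ • (e + (y : E)) := by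
  nth_rw 1 [← inner_smul_add_orthogonalProjectionOnto he z]
  push_cast
  module

lemma inner_sub_coe_orthogonal (z : E) (y : (ℝ ∙ e)ᗮ) : ⟪e, z - (y : E)⟫ = ⟪e, z⟫ := by
  rw [inner_sub_right, inner_coe_orthogonal, sub_zero]

lemma sub_coe_ne_zero {z : E} (hz : 0 < ⟪e, z⟫) (y : (ℝ ∙ e)ᗮ) : z - (y : E) ≠ 0 := fun h => by
  rw [← inner_sub_coe_orthogonal z y, h, inner_zero_right] at hz
  exact hz.false

lemma inner_le_norm_sub_coe (he : ‖e‖ = 1) (z : E) (y : (ℝ ∙ e)ᗮ) : ⟪e, z⟫ ≤ ‖z - (y : E)‖ := by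
  simpa [inner_sub_coe_orthogonal, he] using real_inner_le_norm e (z - (y : E))

lemma inner_add_smul_pos {z b : E} {s : ℝ} (he : ‖e‖ = 1) (hb : ‖b‖ = 1) (hs : |s| < ⟪e, z⟫) :
    0 < ⟪e, z + s • b⟫ := by
  have abs_le : |⟪e, s • b⟫| ≤ |s| := by
    simpa [he, hb, norm_smul] using abs_real_inner_le_norm e (s • b)
  rw [inner_add_right]
  linarith [neg_abs_le ⟪e, s • b⟫]

lemma abs_second_difference_halfSpaceKernel_sub_coe_div_le (he : ‖e‖ = 1) {z b : E} (hb : ‖b‖ = 1)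
    {h : ℝ} (hh : |h| ≤ ⟪e, z⟫ / 2) (h_ne : h ≠ 0) (y : (ℝ ∙ e)ᗮ) :
    |(halfSpaceKernel e (z - (y : E) + h • b) + halfSpaceKernel e (z - (y : E) - h • b)
        - 2 * halfSpaceKernel e (z - (y : E))) / h ^ 2|
      ≤ 2 ^ (Module.finrank ℝ E + 1) * (Module.finrank ℝ E * (Module.finrank ℝ E + 5)) / ⟪e, z⟫
        * invNormPow (z - (y : E)) := by
  have hz : 0 < ⟪e, z⟫ := by linarith [abs_pos.2 h_ne]
  have inner_le := inner_le_norm_sub_coe he z y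
  rw [abs_div, abs_sq, div_le_iff₀ (by positivity), div_mul_eq_mul_div]
  refine (abs_second_difference_halfSpaceKernel_le he hb (sub_coe_ne_zero hz y)
    (hh.trans (by linarith))).trans ?_
  have := invNormPow_nonneg (z - (y : E))
  gcongr

lemma finrank_orthogonal_span_singleton_add_one [FiniteDimensional ℝ E] (he : e ≠ 0) :
    Module.finrank ℝ (ℝ ∙ e)ᗮ + 1 = Module.finrank ℝ E := by
  rw [← Submodule.finrank_add_finrank_orthogonal (ℝ ∙ e), finrank_span_singleton he, add_comm]

end Hyperplane

section ChangeOfVariables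

variable {V : Type*} [NormedAddCommGroup V] [InnerProductSpace ℝ V] [FiniteDimensional ℝ V]
  [MeasurableSpace V] [BorelSpace V] {t : ℝ}

lemma integrable_comp_sub_smul_iff (ht : t ≠ 0) (f : V → ℝ) (x : V) :
    Integrable (fun y => f (x - t • y)) ↔ Integrable f := by
  rw [integrable_comp_smul_iff volume (fun y => f (x - y)) ht]
  exact ⟨fun h => by simpa using h.comp_sub_left x, fun h => h.comp_sub_left x⟩

lemma integral_eq_pow_mul_integral_comp_sub_smul (ht : 0 < t) (f : V → ℝ) (x : V) :
    ∫ y, f y = t ^ Module.finrank ℝ V * ∫ y, f (x - t • y) := by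
  rw [Measure.integral_comp_smul volume (fun y => f (x - y)) t, integral_sub_left_eq_self,
    abs_of_pos (by positivity), smul_eq_mul, mul_inv_cancel_left₀ (by positivity)]

end ChangeOfVariables

section PoissonIntegral

variable {E : Type*} [NormedAddCommGroup E] [InnerProductSpace ℝ E] [FiniteDimensional ℝ E]
  [MeasurableSpace E] [BorelSpace E] {e : E}

/-- The Poisson integral, without its normalising factor, of boundary values `g` on the hyperplane
`(ℝ ∙ e)ᗮ`. The substitution `y ↦ P z - ⟪e, z⟫ • y` has already been made in the integral of
`halfSpaceKernel e (z - y) * g y`, so that the formula makes sense up to the boundary. -/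
def halfSpacePoissonIntegral (e : E) (g : (ℝ ∙ e)ᗮ → ℝ) (z : E) : ℝ :=
  ∫ y : (ℝ ∙ e)ᗮ,
    invNormPow (e + (y : E)) * g ((ℝ ∙ e)ᗮ.orthogonalProjectionOnto z - ⟪e, z⟫ • y)

lemma integrable_invNormPow_add (he : ‖e‖ = 1) :
    Integrable fun y : (ℝ ∙ e)ᗮ => invNormPow (e + (y : E)) := by
  simp only [invNormPow, norm_add_coe_sq he]
  refine integrable_rpow_neg_one_add_norm_sq ?_
  have he_ne : e ≠ 0 := norm_ne_zero_iff.1 (he ▸ one_ne_zero)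
  exact_mod_cast (finrank_orthogonal_span_singleton_add_one he_ne).le

lemma integrable_invNormPow_sub (he : ‖e‖ = 1) {z : E} (hz : 0 < ⟪e, z⟫) :
    Integrable fun y : (ℝ ∙ e)ᗮ => invNormPow (z - (y : E)) := by
  rw [← integrable_comp_sub_smul_iff hz.ne' _ ((ℝ ∙ e)ᗮ.orthogonalProjectionOnto z)]
  simp only [sub_coe_orthogonalProjectionOnto_sub_smul he, invNormPow_smul hz]
  exact (integrable_invNormPow_add he).const_mul _

lemma integral_invNormPow_mul_sub (he : ‖e‖ = 1) {z : E} (hz : 0 < ⟪e, z⟫) (q : E → (ℝ ∙ e)ᗮ → ℝ) :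
    ∫ y : (ℝ ∙ e)ᗮ, invNormPow (z - (y : E)) * q (z - (y : E)) y = ⟪e, z⟫⁻¹ * ∫ y : (ℝ ∙ e)ᗮ,
      invNormPow (e + (y : E))
        * q (⟪e, z⟫ • (e + (y : E))) ((ℝ ∙ e)ᗮ.orthogonalProjectionOnto z - ⟪e, z⟫ • y) := by
  have he_ne : e ≠ 0 := norm_ne_zero_iff.1 (he ▸ one_ne_zero)
  rw [integral_eq_pow_mul_integral_comp_sub_smul hz _ ((ℝ ∙ e)ᗮ.orthogonalProjectionOnto z)]
  simp only [sub_coe_orthogonalProjectionOnto_sub_smul he, invNormPow_smul hz, mul_assoc,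
    ← finrank_orthogonal_span_singleton_add_one he_ne, integral_const_mul]
  field_simp
  ring

variable {g : (ℝ ∙ e)ᗮ → ℝ} {M : ℝ}

lemma halfSpacePoissonIntegral_eq_integral_kernel (he : ‖e‖ = 1) {z : E} (hz : 0 < ⟪e, z⟫) :
    halfSpacePoissonIntegral e g z = ∫ y : (ℝ ∙ e)ᗮ, halfSpaceKernel e (z - (y : E)) * g y := by
  have := integral_invNormPow_mul_sub he hz fun _ y => ⟪e, z⟫ * g y
  simp only [halfSpaceKernel, inner_sub_coe_orthogonal, mul_assoc, mul_left_comm _ ⟪e, z⟫,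
    integral_const_mul] at this ⊢
  rw [this, mul_inv_cancel_left₀ hz.ne', halfSpacePoissonIntegral]

lemma integrable_halfSpaceKernel_mul (he : ‖e‖ = 1) (hg : AEStronglyMeasurable g)
    (hgM : ∀ y, |g y| ≤ M) {z : E} (hz : 0 < ⟪e, z⟫) :
    Integrable fun y : (ℝ ∙ e)ᗮ => halfSpaceKernel e (z - (y : E)) * g y := by
  simp only [halfSpaceKernel, inner_sub_coe_orthogonal]
  exact ((integrable_invNormPow_sub he hz).const_mul _).mul_bdd hg (.of_forall hgM)

lemma abs_halfSpacePoissonIntegral_le (he : ‖e‖ = 1) (hgM : ∀ y, |g y| ≤ M) (z : E) :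
    |halfSpacePoissonIntegral e g z| ≤ (∫ y : (ℝ ∙ e)ᗮ, invNormPow (e + (y : E))) * M := calc
  _ ≤ ∫ y : (ℝ ∙ e)ᗮ, invNormPow (e + (y : E)) * M :=
    norm_integral_le_of_norm_le ((integrable_invNormPow_add he).mul_const M)
      (.of_forall fun _ => norm_invNormPow_mul_le (hgM _) _)
  _ = _ := integral_mul_const _ _

lemma continuous_halfSpacePoissonIntegral (he : ‖e‖ = 1) (hg : Continuous g)
    (hgM : ∀ y, |g y| ≤ M) : Continuous (halfSpacePoissonIntegral e g) := by
  exact continuous_of_dominated (bound := fun y => invNormPow (e + (y : E)) * M)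
    (fun z => Measurable.aestronglyMeasurable (by fun_prop))
    (fun z => .of_forall fun y => norm_invNormPow_mul_le (hgM _) _)
    ((integrable_invNormPow_add he).mul_const M) (.of_forall fun y => by fun_prop)

lemma halfSpacePoissonIntegral_of_inner_eq_zero {z : E} (hz : ⟪e, z⟫ = 0) :
    halfSpacePoissonIntegral e g z = (∫ y : (ℝ ∙ e)ᗮ, invNormPow (e + (y : E)))
      * g ((ℝ ∙ e)ᗮ.orthogonalProjectionOnto z) := by
  simp only [halfSpacePoissonIntegral, hz, zero_smul, sub_zero, integral_mul_const]

lemma integrable_second_difference_halfSpaceKernel_mul (he : ‖e‖ = 1)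
    (hg : AEStronglyMeasurable g) (hgM : ∀ y, |g y| ≤ M) {z b : E} (hb : ‖b‖ = 1) {h : ℝ}
    (hh : |h| < ⟪e, z⟫) :
    Integrable fun y : (ℝ ∙ e)ᗮ => (halfSpaceKernel e (z - (y : E) + h • b)
      + halfSpaceKernel e (z - (y : E) - h • b) - 2 * halfSpaceKernel e (z - (y : E))) * g y := by
  have kernel_integrable : ∀ s : ℝ, |s| < ⟪e, z⟫ →
      Integrable fun y : (ℝ ∙ e)ᗮ => halfSpaceKernel e (z - (y : E) + s • b) * g y := fun s hs => by
    simpa only [add_sub_right_comm] using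
      integrable_halfSpaceKernel_mul he hg hgM (inner_add_smul_pos he hb hs)
  have := ((kernel_integrable h hh).add (kernel_integrable (-h) (by rwa [abs_neg]))).sub
    ((kernel_integrable 0 (by simpa using (abs_nonneg h).trans_lt hh)).const_mul 2)
  refine this.congr (.of_forall fun y => ?_)
  simp only [Pi.add_apply, Pi.sub_apply, neg_smul, ← sub_eq_add_neg, zero_smul, add_zero]
  ring

lemma second_difference_halfSpacePoissonIntegral (he : ‖e‖ = 1)
    (hg : AEStronglyMeasurable g) (hgM : ∀ y, |g y| ≤ M) {z b : E} (hb : ‖b‖ = 1) {h : ℝ}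
    (hh : |h| < ⟪e, z⟫) :
    halfSpacePoissonIntegral e g (z + h • b) + halfSpacePoissonIntegral e g (z - h • b)
        - 2 * halfSpacePoissonIntegral e g z
      = ∫ y : (ℝ ∙ e)ᗮ, (halfSpaceKernel e (z - (y : E) + h • b)
        + halfSpaceKernel e (z - (y : E) - h • b) - 2 * halfSpaceKernel e (z - (y : E))) * g y := by
  have hz : 0 < ⟪e, z⟫ := (abs_nonneg h).trans_lt hh
  have h_add : 0 < ⟪e, z + h • b⟫ := inner_add_smul_pos he hb hh
  have h_sub : 0 < ⟪e, z - h • b⟫ := by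
    simpa [sub_eq_add_neg] using inner_add_smul_pos (s := -h) he hb (by rwa [abs_neg])
  have kernel_integrable := fun w (hw : 0 < ⟪e, w⟫) => integrable_halfSpaceKernel_mul he hg hgM hw
  simp only [sub_mul, add_mul, ← add_sub_right_comm, sub_right_comm z _ (h • b), mul_assoc]
  rw [integral_sub (by exact (kernel_integrable _ h_add).add (kernel_integrable _ h_sub))
    ((kernel_integrable _ hz).const_mul 2),
    integral_add (kernel_integrable _ h_add) (kernel_integrable _ h_sub), integral_const_mul,
    halfSpacePoissonIntegral_eq_integral_kernel he h_add,
    halfSpacePoissonIntegral_eq_integral_kernel he h_sub,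
    halfSpacePoissonIntegral_eq_integral_kernel he hz]

lemma hasSymmLaplacianAt_halfSpacePoissonIntegral (he : ‖e‖ = 1) (hg : AEStronglyMeasurable g)
    (hgM : ∀ y, |g y| ≤ M) {z : E} (hz : 0 < ⟪e, z⟫) :
    HasSymmLaplacianAt (halfSpacePoissonIntegral e g) 0 z := by
  set b := stdOrthonormalBasis ℝ E
  set C : ℝ := 2 ^ (Module.finrank ℝ E + 1) * (Module.finrank ℝ E * (Module.finrank ℝ E + 5))
  set quotient : ℝ → (ℝ ∙ e)ᗮ → Fin (Module.finrank ℝ E) → ℝ := fun h y i =>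
    (halfSpaceKernel e (z - (y : E) + h • b i) + halfSpaceKernel e (z - (y : E) - h • b i)
      - 2 * halfSpaceKernel e (z - (y : E))) / h ^ 2
  have small : ∀ᶠ h : ℝ in 𝓝[≠] 0, |h| ≤ ⟪e, z⟫ / 2 :=
    nhdsWithin_le_nhds ((continuous_abs.tendsto' 0 0 abs_zero).eventually_le_const (half_pos hz))
  have lim : Tendsto (fun h => ∫ y, (∑ i, quotient h y i) * g y) (𝓝[≠] 0)
      (𝓝 (∫ _ : (ℝ ∙ e)ᗮ, 0)) := by
    refine tendsto_integral_filter_of_dominated_convergence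
      (fun y => Module.finrank ℝ E * (C / ⟪e, z⟫ * invNormPow (z - (y : E))) * M)
      (.of_forall fun h => .mul (Measurable.aestronglyMeasurable (by fun_prop)) hg) ?_
      (((integrable_invNormPow_sub he hz).const_mul _).const_mul _ |>.mul_const M)
      (.of_forall fun y => ?_)
    · filter_upwards [small, self_mem_nhdsWithin] with h hh h_ne
      refine .of_forall fun y => ?_
      have quotient_le : ∀ i ∈ Finset.univ,
          ‖quotient h y i‖ ≤ C / ⟪e, z⟫ * invNormPow (z - (y : E)) := fun i _ =>
        abs_second_difference_halfSpaceKernel_sub_coe_div_le he (b.norm_eq_one i) hh h_ne y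
      have sum_le := norm_sum_le_of_le _ quotient_le
      rw [Finset.sum_const, Finset.card_univ, Fintype.card_fin, nsmul_eq_mul] at sum_le
      exact (norm_mul_le _ _).trans
        (mul_le_mul sum_le (hgM y) (norm_nonneg _) ((norm_nonneg _).trans sum_le))
    · simpa only [zero_mul] using
        (hasSymmLaplacianAt_halfSpaceKernel e (sub_coe_ne_zero hz y)).mul_const (g y)
  rw [integral_zero] at lim
  refine lim.congr' ?_
  filter_upwards [small] with h hh
  have hh' : |h| < ⟪e, z⟫ := hh.trans_lt (half_lt_self hz)
  simp only [quotient, Finset.sum_mul, div_mul_eq_mul_div]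
  rw [integral_finsetSum _ fun i _ => (integrable_second_difference_halfSpaceKernel_mul he hg hgM
    (b.norm_eq_one i) hh').div_const _]
  simp only [integral_div,
    ← second_difference_halfSpacePoissonIntegral he hg hgM (b.norm_eq_one _) hh']
  rfl

lemma hasDerivAt_halfSpacePoissonIntegral_add_smul (he : ‖e‖ = 1) (hg : AEStronglyMeasurable g)
    (hgM : ∀ y, |g y| ≤ M) {z b : E} (hz : 0 < ⟪e, z⟫) (hb : ‖b‖ = 1) :
    HasDerivAt (fun s : ℝ => halfSpacePoissonIntegral e g (z + s • b))
      (∫ y : (ℝ ∙ e)ᗮ, invNormPow (z - (y : E)) * zonalForm e b (z - (y : E)) * g y) 0 := by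
  have small : ball (0 : ℝ) (⟪e, z⟫ / 2) ∈ 𝓝 0 := ball_mem_nhds 0 (half_pos hz)
  have le_half_norm : ∀ s ∈ ball (0 : ℝ) (⟪e, z⟫ / 2), ∀ y : (ℝ ∙ e)ᗮ, |s| ≤ ‖z - (y : E)‖ / 2 :=
    fun s hs y => by
      rw [mem_ball_zero_iff, Real.norm_eq_abs] at hs
      linarith [inner_le_norm_sub_coe he z y]
  have deriv_le : ∀ s ∈ ball (0 : ℝ) (⟪e, z⟫ / 2), ∀ y : (ℝ ∙ e)ᗮ,
      ‖invNormPow (z - (y : E) + s • b) * zonalForm e b (z - (y : E) + s • b) * g y‖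
        ≤ 2 ^ Module.finrank ℝ E * invNormPow (z - (y : E)) * (1 + Module.finrank ℝ E) * M :=
    fun s hs y => by
      have := invNormPow_nonneg (z - (y : E))
      rw [norm_mul, norm_mul, Real.norm_of_nonneg (invNormPow_nonneg _)]
      gcongr
      · exact invNormPow_le_of_half_norm_le (sub_coe_ne_zero hz y)
          (half_norm_le_norm_add_smul hb (le_half_norm s hs y))
      · simpa [he, hb] using abs_zonalForm_le e b (z - (y : E) + s • b)
      · exact hgM y
  have deriv := (hasDerivAt_integral_of_dominated_loc_of_deriv_le
    (F := fun s (y : (ℝ ∙ e)ᗮ) => halfSpaceKernel e (z - (y : E) + s • b) * g y)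
    (F' := fun s (y : (ℝ ∙ e)ᗮ) =>
      invNormPow (z - (y : E) + s • b) * zonalForm e b (z - (y : E) + s • b) * g y)
    small (.of_forall fun s => .mul (Measurable.aestronglyMeasurable (by fun_prop)) hg)
    (by simpa using integrable_halfSpaceKernel_mul he hg hgM hz)
    (.mul (Measurable.aestronglyMeasurable (by fun_prop)) hg)
    (.of_forall fun y s hs => deriv_le s hs y)
    ((((integrable_invNormPow_sub he hz).const_mul _).mul_const _).mul_const M)
    (.of_forall fun y s hs => (hasDerivAt_halfSpaceKernel_add_smul
      (add_smul_ne_zero hb (sub_coe_ne_zero hz y) (le_half_norm s hs y))).mul_const (g y))).2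
  simp only [zero_smul, add_zero] at deriv
  refine deriv.congr_of_eventuallyEq ?_
  filter_upwards [small] with s hs
  rw [mem_ball_zero_iff, Real.norm_eq_abs] at hs
  rw [halfSpacePoissonIntegral_eq_integral_kernel he (inner_add_smul_pos he hb (by linarith))]
  simp only [add_sub_right_comm]

end PoissonIntegral

section Representation

variable {E : Type*} [NormedAddCommGroup E] [InnerProductSpace ℝ E] {e : E} {V : E → ℝ} {M : ℝ}

lemma continuous_comp_coe_orthogonal (hV_cont : ContinuousOn V {z | 0 ≤ ⟪e, z⟫}) :
    Continuous fun y : (ℝ ∙ e)ᗮ => V y :=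
  hV_cont.comp_continuous continuous_subtype_val fun y => (inner_coe_orthogonal y).ge

variable [FiniteDimensional ℝ E] [MeasurableSpace E] [BorelSpace E]

/-- The two sides have the same boundary values, so the maximum principle applies to their
difference. -/
lemma integral_invNormPow_mul_eq_halfSpacePoissonIntegral (he : ‖e‖ = 1)
    (hV_cont : ContinuousOn V {z | 0 ≤ ⟪e, z⟫})
    (hV_harm : ∀ z, 0 < ⟪e, z⟫ → HasSymmLaplacianAt V 0 z)
    (hVM : ∀ z, 0 ≤ ⟪e, z⟫ → |V z| ≤ M) {z : E} (hz : 0 ≤ ⟪e, z⟫) :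
    (∫ y : (ℝ ∙ e)ᗮ, invNormPow (e + (y : E))) * V z
      = halfSpacePoissonIntegral e (fun y => V y) z := by
  set J := ∫ y : (ℝ ∙ e)ᗮ, invNormPow (e + (y : E))
  set P := halfSpacePoissonIntegral e (fun y => V y)
  have hJ : 0 ≤ J := integral_nonneg fun y => invNormPow_nonneg _
  have hg := continuous_comp_coe_orthogonal hV_cont
  have hgM : ∀ y : (ℝ ∙ e)ᗮ, |V y| ≤ M := fun y => hVM y (inner_coe_orthogonal y).ge
  have diff_cont : ContinuousOn (fun w => J * V w - P w) {w | 0 ≤ ⟪e, w⟫} :=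
    (hV_cont.const_mul J).sub (continuous_halfSpacePoissonIntegral he hg hgM).continuousOn
  have diff_harm : ∀ w, 0 < ⟪e, w⟫ → HasSymmLaplacianAt (fun w => J * V w - P w) 0 w :=
    fun w hw => by
      simpa using ((hV_harm w hw).const_mul J).sub
        (hasSymmLaplacianAt_halfSpacePoissonIntegral he hg.aestronglyMeasurable hgM hw)
  have diff_le : ∀ w, 0 ≤ ⟪e, w⟫ → |J * V w - P w| ≤ J * M + J * M := fun w hw => by
    refine (abs_sub _ _).trans (add_le_add ?_ (abs_halfSpacePoissonIntegral_le he hgM w))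
    rw [abs_mul, abs_of_nonneg hJ]
    exact mul_le_mul_of_nonneg_left (hVM w hw) hJ
  have diff_bdry : ∀ w, ⟪e, w⟫ = 0 → J * V w - P w = 0 := fun w hw => by
    have proj_eq : ((ℝ ∙ e)ᗮ.orthogonalProjectionOnto w : E) = w := by
      simpa [hw] using inner_smul_add_orthogonalProjectionOnto he w
    simp only [P, halfSpacePoissonIntegral_of_inner_eq_zero hw, proj_eq, J, sub_self]
  refine sub_eq_zero.1 (le_antisymm ?_ (neg_nonpos.1 ?_))
  · exact nonpos_on_halfSpace_of_bddAbove he diff_cont diff_harm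
      (fun w hw => (le_abs_self _).trans (diff_le w hw)) (fun w hw => (diff_bdry w hw).le) hz
  · exact nonpos_on_halfSpace_of_bddAbove (D := fun w => -(J * V w - P w)) he diff_cont.neg
      (fun w hw => by simpa using (diff_harm w hw).const_mul (-1))
      (fun w hw => (neg_le_abs _).trans (diff_le w hw))
      (fun w hw => by simp only [diff_bdry w hw, neg_zero, le_refl]) hz

lemma integral_invNormPow_mul_abs_deriv_le (he : ‖e‖ = 1)
    (hV_cont : ContinuousOn V {z | 0 ≤ ⟪e, z⟫})
    (hV_harm : ∀ z, 0 < ⟪e, z⟫ → HasSymmLaplacianAt V 0 z)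
    (hVM : ∀ z, 0 ≤ ⟪e, z⟫ → |V z| ≤ M) {z b : E} (hz : 0 < ⟪e, z⟫) (hb : ‖b‖ = 1) {V' : ℝ}
    (hV' : HasDerivAt (fun s : ℝ => V (z + s • b)) V' 0) :
    (∫ y : (ℝ ∙ e)ᗮ, invNormPow (e + (y : E))) * |V'|
      ≤ (∫ y : (ℝ ∙ e)ᗮ, invNormPow (e + (y : E)) * |zonalForm e b (e + (y : E))|)
        * (M / ⟪e, z⟫) := by
  set J := ∫ y : (ℝ ∙ e)ᗮ, invNormPow (e + (y : E))
  have hJ : 0 ≤ J := integral_nonneg fun y => invNormPow_nonneg _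
  have hg := continuous_comp_coe_orthogonal hV_cont
  have hgM : ∀ y : (ℝ ∙ e)ᗮ, |V y| ≤ M := fun y => hVM y (inner_coe_orthogonal y).ge
  have deriv_eq : J * V' = ∫ y : (ℝ ∙ e)ᗮ,
      invNormPow (z - (y : E)) * zonalForm e b (z - (y : E)) * V y := by
    refine (hV'.const_mul J).unique ((hasDerivAt_halfSpacePoissonIntegral_add_smul he
      hg.aestronglyMeasurable hgM hz hb).congr_of_eventuallyEq ?_)
    filter_upwards [ball_mem_nhds (0 : ℝ) hz] with s hs
    rw [mem_ball_zero_iff, Real.norm_eq_abs] at hs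
    exact integral_invNormPow_mul_eq_halfSpacePoissonIntegral he hV_cont hV_harm hVM
      (inner_add_smul_pos he hb hs).le
  have integrable_bound : Integrable fun y : (ℝ ∙ e)ᗮ =>
      invNormPow (z - (y : E)) * (|zonalForm e b (z - (y : E))| * M) := by
    simp only [← mul_assoc]
    refine ((integrable_invNormPow_sub he hz).mul_bdd (c := (1 + Module.finrank ℝ E) * (‖e‖ * ‖b‖))
      (Measurable.aestronglyMeasurable (by fun_prop)) (.of_forall fun y => ?_)).mul_const M
    rw [norm_abs_eq_norm]
    exact abs_zonalForm_le _ _ _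
  calc J * |V'| = |J * V'| := by rw [abs_mul, abs_of_nonneg hJ]
    _ ≤ ∫ y : (ℝ ∙ e)ᗮ, invNormPow (z - (y : E)) * (|zonalForm e b (z - (y : E))| * M) := by
        rw [deriv_eq, ← Real.norm_eq_abs]
        refine norm_integral_le_of_norm_le integrable_bound (.of_forall fun y => ?_)
        rw [mul_assoc]
        refine norm_invNormPow_mul_le ?_ _
        rw [abs_mul]
        exact mul_le_mul_of_nonneg_left (hgM y) (abs_nonneg _)
    _ = _ := by
        rw [integral_invNormPow_mul_sub he hz fun w _ => |zonalForm e b w| * M]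
        simp only [zonalForm_smul hz.ne', ← mul_assoc, integral_mul_const]
        ring

end Representation

section ConeIntegral

variable {E : Type*} [NormedAddCommGroup E] [InnerProductSpace ℝ E] [FiniteDimensional ℝ E]
  [MeasurableSpace E] [BorelSpace E] {e : E}

lemma lintegral_eq_pow_mul_lintegral_comp_smul {f : E → ENNReal} (hf : Measurable f) {t : ℝ}
    (ht : t ≠ 0) :
    ∫⁻ z, f z = ENNReal.ofReal (|t| ^ Module.finrank ℝ E) * ∫⁻ z, f (t • z) := by
  have pow_pos : 0 < |t| ^ Module.finrank ℝ E := by positivity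
  rw [← lintegral_map hf (measurable_const_smul t), Measure.map_addHaar_smul volume ht,
    lintegral_smul_measure, smul_eq_mul, ← mul_assoc, ← ENNReal.ofReal_mul pow_pos.le, abs_inv,
    abs_pow, mul_inv_cancel₀ pow_pos.ne', ENNReal.ofReal_one, one_mul]

lemma lintegral_abs_pow_mul_exp_neg_mul_sq (d : ℕ) {c : ℝ} (hc : 0 < c) :
    ∫⁻ t : ℝ, ENNReal.ofReal (|t| ^ d * rexp (-c * t ^ 2))
      = ENNReal.ofReal (Real.Gamma ((d + 1) / 2) * c ^ (-(d + 1 : ℝ) / 2)) := by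
  have hd : (-1 : ℝ) < d := by linarith [d.cast_nonneg (α := ℝ)]
  have integrable : Integrable fun t : ℝ => |t| ^ d * rexp (-c * t ^ 2) := by
    simpa using (integrable_rpow_mul_exp_neg_mul_sq hc hd).norm
  have half_line := integral_rpow_mul_exp_neg_mul_rpow two_pos hd hc
  simp only [Real.rpow_natCast, Real.rpow_two] at half_line
  have whole_line := integral_comp_abs (f := fun t : ℝ => t ^ d * rexp (-c * t ^ 2))
  simp only [sq_abs] at whole_line
  rw [← ofReal_integral_eq_lintegral_ofReal integrable (.of_forall fun t => by positivity),
    whole_line, half_line]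
  congr 1
  ring

lemma measurePreserving_smul_add_coe (he : ‖e‖ = 1) :
    MeasurePreserving fun p : ℝ × (ℝ ∙ e)ᗮ => p.1 • e + (p.2 : E) :=
  ((ℝ ∙ e).orthogonalDecomposition.symm.measurePreserving.comp
    (WithLp.volume_preserving_toLp (ℝ ∙ e) (ℝ ∙ e)ᗮ)).comp
    ((LinearIsometryEquiv.toSpanUnitSingleton e he).measurePreserving.prod
      (MeasurePreserving.id (volume : Measure (ℝ ∙ e)ᗮ)))

/-- Fubini in `z = t • (e + y)`; the integral over `t` yields the factor `Γ(n/2)`. -/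
lemma lintegral_mul_exp_neg_norm_sq_eq (he : ‖e‖ = 1) {q : E → ENNReal} (hq : Measurable q)
    (hq_smul : ∀ t : ℝ, t ≠ 0 → ∀ z, q (t • z) = q z) :
    ∫⁻ z, q z * ENNReal.ofReal (rexp (-‖z‖ ^ 2))
      = ENNReal.ofReal (Real.Gamma (Module.finrank ℝ E / 2))
        * ∫⁻ y : (ℝ ∙ e)ᗮ, q (e + (y : E)) * ENNReal.ofReal (invNormPow (e + (y : E))) := by
  set d := Module.finrank ℝ (ℝ ∙ e)ᗮ
  have hd : (Module.finrank ℝ E : ℝ) = d + 1 := by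
    exact_mod_cast
      (finrank_orthogonal_span_singleton_add_one (norm_ne_zero_iff.1 (he ▸ one_ne_zero))).symm
  have slice : ∀ᵐ t : ℝ, ∫⁻ y : (ℝ ∙ e)ᗮ,
        q (t • e + (y : E)) * ENNReal.ofReal (rexp (-‖t • e + (y : E)‖ ^ 2))
      = ∫⁻ y : (ℝ ∙ e)ᗮ, q (e + (y : E))
        * ENNReal.ofReal (|t| ^ d * rexp (-(1 + ‖y‖ ^ 2) * t ^ 2)) := by
    filter_upwards [Measure.ae_ne volume (0 : ℝ)] with t ht
    rw [lintegral_eq_pow_mul_lintegral_comp_smul (by fun_prop) ht,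
      ← lintegral_const_mul _ (by fun_prop)]
    refine lintegral_congr fun y => ?_
    rw [Submodule.coe_smul, ← smul_add, hq_smul t ht, norm_smul_add_coe_sq he, neg_mul,
      ENNReal.ofReal_mul (by positivity)]
    ring
  rw [← (measurePreserving_smul_add_coe he).lintegral_comp (by fun_prop), Measure.volume_eq_prod,
    lintegral_prod _ (by fun_prop), lintegral_congr_ae slice,
    lintegral_lintegral_swap (by fun_prop), ← lintegral_const_mul _ (by fun_prop)]
  refine lintegral_congr fun y => ?_
  rw [lintegral_const_mul _ (by fun_prop),
    lintegral_abs_pow_mul_exp_neg_mul_sq d (by positivity), invNormPow, norm_add_coe_sq he, hd,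
    ENNReal.ofReal_mul (Real.Gamma_nonneg_of_nonneg (by positivity))]
  ring

lemma integral_mul_exp_neg_norm_sq_eq (he : ‖e‖ = 1) {q : E → ℝ} (hq : Measurable q)
    (hq_nonneg : ∀ z, 0 ≤ q z) (hq_smul : ∀ t : ℝ, t ≠ 0 → ∀ z, q (t • z) = q z) :
    ∫ z, q z * rexp (-‖z‖ ^ 2) = Real.Gamma (Module.finrank ℝ E / 2)
      * ∫ y : (ℝ ∙ e)ᗮ, invNormPow (e + (y : E)) * q (e + (y : E)) := by
  have := lintegral_mul_exp_neg_norm_sq_eq (q := fun z => ENNReal.ofReal (q z)) he (by fun_prop)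
    fun t ht z => by rw [hq_smul t ht]
  simp only [← ENNReal.ofReal_mul (hq_nonneg _)] at this
  rw [integral_eq_lintegral_of_nonneg_ae
      (.of_forall fun z => mul_nonneg (hq_nonneg z) (by positivity))
      (Measurable.aestronglyMeasurable (by fun_prop)),
    integral_eq_lintegral_of_nonneg_ae
      (.of_forall fun y => mul_nonneg (invNormPow_nonneg _) (hq_nonneg _))
      (Measurable.aestronglyMeasurable (by fun_prop)), this, ENNReal.toReal_mul,
    ENNReal.toReal_ofReal (Real.Gamma_nonneg_of_nonneg (by positivity))]
  simp only [mul_comm]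

end ConeIntegral

section ZonalIntegral

variable {E : Type*} [NormedAddCommGroup E] [InnerProductSpace ℝ E]

lemma zonalForm_map (L : E ≃ₗᵢ[ℝ] E) (a b z : E) :
    zonalForm (L a) (L b) (L z) = zonalForm a b z := by
  simp only [zonalForm, L.inner_map_map, L.norm_map]

lemma zonalForm_smul_smul (t : ℝ) (a b z : E) :
    zonalForm (t • a) (t • b) z = t ^ 2 * zonalForm a b z := by
  simp only [zonalForm, real_inner_smul_left, real_inner_smul_right]
  ring

lemma zonalForm_polarization (a b z : E) :
    zonalForm (a + b) (a + b) z - zonalForm (a - b) (a - b) z = 4 * zonalForm a b z := by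
  simp only [zonalForm, inner_add_left, inner_add_right, inner_sub_left, inner_sub_right,
    real_inner_comm a b]
  ring

variable [FiniteDimensional ℝ E] {e : E}

lemma Gamma_half_finrank_pos (he : ‖e‖ = 1) : 0 < Real.Gamma (Module.finrank ℝ E / 2) := by
  have finrank_pos : 0 < Module.finrank ℝ E :=
    Module.finrank_pos_iff_exists_ne_zero.2 ⟨e, norm_ne_zero_iff.1 (he ▸ one_ne_zero)⟩
  exact Real.Gamma_pos_of_pos (by positivity)

variable [MeasurableSpace E] [BorelSpace E]

lemma integrable_exp_neg_norm_sq : Integrable fun z : E => rexp (-‖z‖ ^ 2) := by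
  simpa [Complex.norm_exp, ← Complex.ofReal_pow] using
    (GaussianFourier.integrable_cexp_neg_mul_sq_norm_add (b := 1) (by simp) 0 (0 : E)).norm

lemma integral_exp_neg_norm_sq :
    ∫ z : E, rexp (-‖z‖ ^ 2) = π ^ (Module.finrank ℝ E / 2 : ℝ) := by
  simpa using GaussianFourier.integral_rexp_neg_mul_sq_norm (V := E) one_pos

lemma integrable_abs_zonalForm_mul_exp (a b : E) :
    Integrable fun z => |zonalForm a b z| * rexp (-‖z‖ ^ 2) := by
  refine integrable_exp_neg_norm_sq.bdd_mul (c := (1 + Module.finrank ℝ E) * (‖a‖ * ‖b‖))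
    (Measurable.aestronglyMeasurable (by fun_prop)) (.of_forall fun z => ?_)
  rw [norm_abs_eq_norm]
  exact abs_zonalForm_le a b z

/-- A reflection maps `‖f‖ • e` to `f`. -/
lemma integral_abs_zonalForm_self_mul_exp (he : ‖e‖ = 1) (f : E) :
    ∫ z, |zonalForm f f z| * rexp (-‖z‖ ^ 2)
      = ‖f‖ ^ 2 * ∫ z, |zonalForm e e z| * rexp (-‖z‖ ^ 2) := by
  set L := (ℝ ∙ (‖f‖ • e - f))ᗮ.reflection
  have hL : L (‖f‖ • e) = f := Submodule.reflection_sub (by simp [norm_smul, he])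
  rw [← L.measurePreserving.integral_comp L.toMeasurableEquiv.measurableEmbedding,
    ← integral_const_mul]
  refine integral_congr_ae (.of_forall fun z => ?_)
  nth_rw 1 2 [← hL]
  simp only [zonalForm_map, zonalForm_smul_smul, L.norm_map, abs_mul, abs_sq, mul_assoc]

lemma integral_abs_zonalForm_mul_exp_le {b : E} (he : ‖e‖ = 1) (hb : ‖b‖ = 1) :
    ∫ z, |zonalForm e b z| * rexp (-‖z‖ ^ 2) ≤ ∫ z, |zonalForm e e z| * rexp (-‖z‖ ^ 2) := by
  set I := ∫ z, |zonalForm e e z| * rexp (-‖z‖ ^ 2)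
  have pointwise : ∀ z, |zonalForm e b z| * rexp (-‖z‖ ^ 2)
      ≤ 4⁻¹ * (|zonalForm (e + b) (e + b) z| * rexp (-‖z‖ ^ 2)
        + |zonalForm (e - b) (e - b) z| * rexp (-‖z‖ ^ 2)) := fun z => by
    have := abs_sub (zonalForm (e + b) (e + b) z) (zonalForm (e - b) (e - b) z)
    rw [zonalForm_polarization, abs_mul, abs_of_pos four_pos] at this
    rw [← add_mul, ← mul_assoc]
    gcongr
    linarith
  have parallelogram : ‖e + b‖ ^ 2 + ‖e - b‖ ^ 2 = 4 := by
    rw [norm_add_sq_real, norm_sub_sq_real, he, hb]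
    ring
  have integrable_add := integrable_abs_zonalForm_mul_exp (e + b) (e + b)
  have integrable_sub := integrable_abs_zonalForm_mul_exp (e - b) (e - b)
  calc ∫ z, |zonalForm e b z| * rexp (-‖z‖ ^ 2)
      ≤ 4⁻¹ * (‖e + b‖ ^ 2 * I + ‖e - b‖ ^ 2 * I) := by
        rw [← integral_abs_zonalForm_self_mul_exp he, ← integral_abs_zonalForm_self_mul_exp he,
          ← integral_add integrable_add integrable_sub, ← integral_const_mul]
        exact integral_mono (integrable_abs_zonalForm_mul_exp e b)
          ((integrable_add.add integrable_sub).const_mul _) pointwise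
    _ = I := by rw [← add_mul, parallelogram]; ring

lemma integral_invNormPow_add_eq (he : ‖e‖ = 1) :
    ∫ y : (ℝ ∙ e)ᗮ, invNormPow (e + (y : E)) = sphereArea (Module.finrank ℝ E) / 2 := by
  have gaussian := integral_mul_exp_neg_norm_sq_eq (q := fun _ => 1) he measurable_const
    (fun _ => zero_le_one) fun _ _ _ => rfl
  simp only [one_mul, mul_one, integral_exp_neg_norm_sq] at gaussian
  have := (Gamma_half_finrank_pos he).ne'
  rw [sphereArea, gaussian]
  field_simp

lemma integral_invNormPow_mul_abs_zonalForm_le {b : E} (he : ‖e‖ = 1) (hb : ‖b‖ = 1) :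
    ∫ y : (ℝ ∙ e)ᗮ, invNormPow (e + (y : E)) * |zonalForm e b (e + (y : E))|
      ≤ ∫ y : (ℝ ∙ e)ᗮ, invNormPow (e + (y : E)) * |zonalForm e e (e + (y : E))| := by
  have cone_formula : ∀ b : E, ∫ z, |zonalForm e b z| * rexp (-‖z‖ ^ 2)
      = Real.Gamma (Module.finrank ℝ E / 2)
        * ∫ y : (ℝ ∙ e)ᗮ, invNormPow (e + (y : E)) * |zonalForm e b (e + (y : E))| := fun b =>
    integral_mul_exp_neg_norm_sq_eq he (by fun_prop) (fun z => abs_nonneg _) fun t ht z => by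
      rw [zonalForm_smul ht]
  have := integral_abs_zonalForm_mul_exp_le he hb
  rw [cone_formula, cone_formula] at this
  exact le_of_mul_le_mul_left this (Gamma_half_finrank_pos he)

end ZonalIntegral

section RadialIntegral

/-- The primitive of the radial part of `invNormPow * zonalForm e e` over a hyperplane of dimension
`d`. -/
def radialPrimitive (d : ℕ) (r : ℝ) : ℝ := r ^ d * (1 + r ^ 2) ^ (-(d + 1 : ℝ) / 2)

/-- The derivative of `radialPrimitive d` for `d ≠ 0`. -/
def radialDeriv (d : ℕ) (r : ℝ) : ℝ :=
  r ^ (d - 1) * ((d - r ^ 2) / (1 + r ^ 2)) * (1 + r ^ 2) ^ (-(d + 1 : ℝ) / 2)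

variable {d : ℕ}

lemma hasDerivAt_radialPrimitive (hd : d ≠ 0) (r : ℝ) :
    HasDerivAt (radialPrimitive d) (radialDeriv d r) r := by
  have one_add_sq_pos : 0 < 1 + r ^ 2 := by positivity
  have := (hasDerivAt_pow d r).mul
    (((hasDerivAt_pow 2 r).const_add 1).rpow_const (p := -(d + 1 : ℝ) / 2)
      (Or.inl one_add_sq_pos.ne'))
  refine this.congr_deriv ?_
  rw [Real.rpow_sub_one one_add_sq_pos.ne', radialDeriv, ← mul_pow_sub_one hd r]
  field_simp
  ring

lemma continuous_radialDeriv : Continuous (radialDeriv d) := by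
  unfold radialDeriv
  have profile : Continuous fun r : ℝ => (1 + r ^ 2) ^ (-(d + 1 : ℝ) / 2) :=
    Continuous.rpow_const (by fun_prop) fun r => Or.inl (by positivity)
  have quotient : Continuous fun r : ℝ => (d - r ^ 2) / (1 + r ^ 2) :=
    Continuous.div (by fun_prop) (by fun_prop) fun r => by positivity
  fun_prop

lemma tendsto_radialPrimitive_atTop : Tendsto (radialPrimitive d) atTop (𝓝 0) := by
  refine squeeze_zero' (g := fun r : ℝ => r⁻¹) ?_ ?_ tendsto_inv_atTop_zero
  · filter_upwards [eventually_gt_atTop 0] with r hr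
    unfold radialPrimitive
    positivity
  · filter_upwards [eventually_gt_atTop 0] with r hr
    have sq_rpow : (r ^ 2) ^ (-(d + 1 : ℝ) / 2) = (r ^ (d + 1))⁻¹ := by
      rw [← Real.rpow_natCast r 2, ← Real.rpow_mul hr.le, ← Real.rpow_natCast r (d + 1),
        ← Real.rpow_neg hr.le]
      congr 1
      push_cast
      ring
    calc radialPrimitive d r ≤ r ^ d * (r ^ 2) ^ (-(d + 1 : ℝ) / 2) := by
          refine mul_le_mul_of_nonneg_left ?_ (by positivity)
          exact Real.rpow_le_rpow_of_nonpos (by positivity) (by linarith)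
            (div_nonpos_of_nonpos_of_nonneg (by linarith [d.cast_nonneg (α := ℝ)]) two_pos.le)
      _ = r⁻¹ := by rw [sq_rpow, pow_succ]; field_simp

lemma radialDeriv_nonneg {r : ℝ} (hr : r ∈ Set.Icc 0 (√d)) : 0 ≤ radialDeriv d r := by
  have sq_le : r ^ 2 ≤ d := (Real.le_sqrt hr.1 d.cast_nonneg).1 hr.2
  have := hr.1
  have := sub_nonneg.2 sq_le
  unfold radialDeriv
  positivity

lemma radialDeriv_nonpos {r : ℝ} (hr : √d ≤ r) : radialDeriv d r ≤ 0 := by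
  have hr_nonneg : 0 ≤ r := (Real.sqrt_nonneg _).trans hr
  have le_sq : (d : ℝ) ≤ r ^ 2 := (Real.sqrt_le_left hr_nonneg).1 hr
  exact mul_nonpos_of_nonpos_of_nonneg (mul_nonpos_of_nonneg_of_nonpos (by positivity)
    (div_nonpos_of_nonpos_of_nonneg (sub_nonpos.2 le_sq) (by positivity))) (by positivity)

lemma integral_abs_radialDeriv (hd : d ≠ 0) :
    ∫ r in Set.Ioi (0 : ℝ), |radialDeriv d r| = 2 * radialPrimitive d (√d) := by
  have deriv := fun (r : ℝ) (_ : r ∈ Set.Ici (√d)) => hasDerivAt_radialPrimitive hd r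
  have nonpos := fun (r : ℝ) (hr : r ∈ Set.Ioi (√d)) => radialDeriv_nonpos (le_of_lt hr)
  have integrable := integrableOn_Ioi_deriv_of_nonpos' deriv nonpos tendsto_radialPrimitive_atTop
  have inner_part : ∫ r in (0 : ℝ)..√d, |radialDeriv d r| = radialPrimitive d (√d) := calc
    _ = ∫ r in (0 : ℝ)..√d, radialDeriv d r :=
      intervalIntegral.integral_congr fun r hr =>
        abs_of_nonneg (radialDeriv_nonneg (by rwa [Set.uIcc_of_le (Real.sqrt_nonneg _)] at hr))
    _ = radialPrimitive d (√d) := by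
      rw [intervalIntegral.integral_eq_sub_of_hasDerivAt
        (fun r _ => hasDerivAt_radialPrimitive hd r)
        (continuous_radialDeriv.intervalIntegrable _ _)]
      simp [radialPrimitive, hd]
  have outer_part : ∫ r in Set.Ioi (√d), |radialDeriv d r| = radialPrimitive d (√d) := calc
    _ = ∫ r in Set.Ioi (√d), -radialDeriv d r :=
      setIntegral_congr_fun measurableSet_Ioi fun r hr => abs_of_nonpos (nonpos r hr)
    _ = radialPrimitive d (√d) := by
      rw [integral_neg,
        integral_Ioi_of_hasDerivAt_of_nonpos' deriv nonpos tendsto_radialPrimitive_atTop]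
      simp
  rw [← intervalIntegral.integral_interval_add_Ioi'
    (continuous_radialDeriv.abs.intervalIntegrable _ _) integrable.norm, inner_part, outer_part]
  ring

lemma radialPrimitive_sqrt : radialPrimitive d (√d)
    = (d : ℝ) ^ (d / 2 : ℝ) / (d + 1 : ℝ) ^ ((d + 1) / 2 : ℝ) := by
  rw [radialPrimitive, Real.sq_sqrt d.cast_nonneg, neg_div, Real.rpow_neg (by positivity),
    Real.sqrt_eq_rpow, ← Real.rpow_natCast, ← Real.rpow_mul d.cast_nonneg, one_div_mul_eq_div,
    add_comm (1 : ℝ), ← div_eq_mul_inv]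

end RadialIntegral

section Constant

lemma sphereArea_pos {n : ℕ} (hn : 0 < n) : 0 < sphereArea n := by
  have := Real.Gamma_pos_of_pos (s := n / 2) (by positivity)
  unfold sphereArea
  positivity

lemma Cconst_nonneg {n : ℕ} (hn : 2 ≤ n) : 0 ≤ Cconst n := by
  have := sphereArea_pos (n := n) (by lia)
  have := sphereArea_pos (n := n - 1) (by lia)
  have : (0 : ℝ) ≤ n - 1 := by
    rw [sub_nonneg]
    exact_mod_cast one_le_two.trans hn
  unfold Cconst
  positivity

lemma two_mul_sphereArea_mul_radialPrimitive_sqrt (d : ℕ) :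
    2 * sphereArea d * radialPrimitive d (√d) = sphereArea (d + 1) / 2 * Cconst (d + 1) := by
  have := sphereArea_pos d.succ_pos
  rw [radialPrimitive_sqrt, Cconst]
  push_cast
  rw [add_sub_cancel_right]
  field_simp
  ring

lemma finrank_mul_volume_ball {V : Type*} [NormedAddCommGroup V] [InnerProductSpace ℝ V]
    [FiniteDimensional ℝ V] [MeasurableSpace V] [BorelSpace V] [Nontrivial V] :
    Module.finrank ℝ V * volume.real (ball (0 : V) 1) = sphereArea (Module.finrank ℝ V) := by
  set d := Module.finrank ℝ V with hd
  have d_pos : 0 < d := Module.finrank_pos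
  have Gamma_succ : Real.Gamma (d / 2 + 1) = d / 2 * Real.Gamma (d / 2) :=
    Real.Gamma_add_one (by positivity)
  have sqrt_pow : √π ^ d = π ^ (d / 2 : ℝ) := by
    rw [Real.sqrt_eq_rpow, ← Real.rpow_natCast, ← Real.rpow_mul pi_pos.le, one_div_mul_eq_div]
  have := Real.Gamma_pos_of_pos (s := d / 2) (by positivity)
  rw [measureReal_def, InnerProductSpace.volume_ball, ENNReal.ofReal_one, one_pow, one_mul, ← hd,
    Gamma_succ, sqrt_pow, ENNReal.toReal_ofReal (by positivity), sphereArea]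
  field_simp

variable {E : Type*} [NormedAddCommGroup E] [InnerProductSpace ℝ E] {e : E}

lemma invNormPow_mul_abs_zonalForm_self_add_coe (he : ‖e‖ = 1) {d : ℕ}
    (hd : d + 1 = Module.finrank ℝ E) (y : (ℝ ∙ e)ᗮ) :
    invNormPow (e + (y : E)) * |zonalForm e e (e + (y : E))|
      = |(d - ‖y‖ ^ 2) / (1 + ‖y‖ ^ 2)| * (1 + ‖y‖ ^ 2) ^ (-(d + 1 : ℝ) / 2) := by
  have inner_eq : ⟪e, e + (y : E)⟫ = 1 := by
    rw [inner_add_right, inner_coe_orthogonal, real_inner_self_eq_norm_sq, he]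
    norm_num
  have : 0 < 1 + ‖y‖ ^ 2 := by positivity
  rw [invNormPow, zonalForm, norm_add_coe_sq he, inner_eq, real_inner_self_eq_norm_sq, he,
    ← hd, mul_comm, ← abs_neg]
  push_cast
  congr 2
  field_simp
  ring

variable [FiniteDimensional ℝ E] [MeasurableSpace E] [BorelSpace E]

lemma integral_invNormPow_mul_abs_zonalForm_self (he : ‖e‖ = 1) (hE : 2 ≤ Module.finrank ℝ E) :
    ∫ y : (ℝ ∙ e)ᗮ, invNormPow (e + (y : E)) * |zonalForm e e (e + (y : E))|
      = sphereArea (Module.finrank ℝ E) / 2 * Cconst (Module.finrank ℝ E) := by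
  have finrank_eq :=
    finrank_orthogonal_span_singleton_add_one (norm_ne_zero_iff.1 (he ▸ one_ne_zero))
  set d := Module.finrank ℝ (ℝ ∙ e)ᗮ with hd
  have d_ne : d ≠ 0 := by lia
  have : Nontrivial (ℝ ∙ e)ᗮ := Module.nontrivial_of_finrank_pos (R := ℝ) (Nat.pos_of_ne_zero d_ne)
  have integrand_eq : ∀ r ∈ Set.Ioi (0 : ℝ), r ^ (d - 1) • (|(d - r ^ 2) / (1 + r ^ 2)|
      * (1 + r ^ 2) ^ (-(d + 1 : ℝ) / 2)) = |radialDeriv d r| := fun r hr => by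
    have profile_pos : 0 < (1 + r ^ 2) ^ (-(d + 1 : ℝ) / 2) := by positivity
    rw [radialDeriv, abs_mul, abs_mul, abs_of_pos (pow_pos (Set.mem_Ioi.1 hr) _),
      abs_of_pos profile_pos, smul_eq_mul, mul_assoc]
  simp only [invNormPow_mul_abs_zonalForm_self_add_coe he finrank_eq]
  rw [integral_fun_norm_addHaar volume fun r : ℝ =>
      |(d - r ^ 2) / (1 + r ^ 2)| * (1 + r ^ 2) ^ (-(d + 1 : ℝ) / 2),
    setIntegral_congr_fun measurableSet_Ioi integrand_eq, integral_abs_radialDeriv d_ne,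
    ← finrank_eq, ← two_mul_sphereArea_mul_radialPrimitive_sqrt, hd, ← finrank_mul_volume_ball,
    ← hd, nsmul_eq_mul, smul_eq_mul]
  ring

end Constant

section HalfSpace

variable {E : Type*} [NormedAddCommGroup E] [InnerProductSpace ℝ E] [FiniteDimensional ℝ E]
  {e : E} {M : ℝ}

lemma abs_deriv_le_of_continuousOn_halfSpace (hE : 2 ≤ Module.finrank ℝ E) (he : ‖e‖ = 1)
    {V : E → ℝ} (hV_cont : ContinuousOn V {z | 0 ≤ ⟪e, z⟫})
    (hV_harm : ∀ z, 0 < ⟪e, z⟫ → HasSymmLaplacianAt V 0 z) (hVM : ∀ z, 0 ≤ ⟪e, z⟫ → |V z| ≤ M)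
    {z b : E} (hz : 0 < ⟪e, z⟫) (hb : ‖b‖ = 1) {V' : ℝ}
    (hV' : HasDerivAt (fun s : ℝ => V (z + s • b)) V' 0) :
    |V'| ≤ Cconst (Module.finrank ℝ E) / ⟪e, z⟫ * M := by
  borelize E
  have half_area_pos : 0 < sphereArea (Module.finrank ℝ E) / 2 :=
    half_pos (sphereArea_pos (by lia))
  have quotient_nonneg : 0 ≤ M / ⟪e, z⟫ :=
    div_nonneg ((abs_nonneg _).trans (hVM z hz.le)) hz.le
  refine le_of_mul_le_mul_left ?_ half_area_pos
  calc sphereArea (Module.finrank ℝ E) / 2 * |V'|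
      = (∫ y : (ℝ ∙ e)ᗮ, invNormPow (e + (y : E))) * |V'| := by rw [integral_invNormPow_add_eq he]
    _ ≤ (∫ y : (ℝ ∙ e)ᗮ, invNormPow (e + (y : E)) * |zonalForm e b (e + (y : E))|)
          * (M / ⟪e, z⟫) :=
      integral_invNormPow_mul_abs_deriv_le he hV_cont hV_harm hVM hz hb hV'
    _ ≤ (∫ y : (ℝ ∙ e)ᗮ, invNormPow (e + (y : E)) * |zonalForm e e (e + (y : E))|)
          * (M / ⟪e, z⟫) :=
      mul_le_mul_of_nonneg_right (integral_invNormPow_mul_abs_zonalForm_le he hb) quotient_nonneg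
    _ = sphereArea (Module.finrank ℝ E) / 2
          * (Cconst (Module.finrank ℝ E) / ⟪e, z⟫ * M) := by
      rw [integral_invNormPow_mul_abs_zonalForm_self he hE]
      ring

lemma hasSymmLaplacianAt_zero_of_harmonicAt {v : E → ℝ} {x : E}
    (hv : InnerProductSpace.HarmonicAt v x) : HasSymmLaplacianAt v 0 x := by
  simpa only [hv.2.self_of_nhds, Pi.zero_apply] using hasSymmLaplacianAt_laplacian hv.1

lemma abs_fderiv_apply_le_div_sub_of_harmonicOnNhd_halfSpace (hE : 2 ≤ Module.finrank ℝ E)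
    (he : ‖e‖ = 1) {c c' : ℝ} (hc : c < c') {v : E → ℝ}
    (hv : InnerProductSpace.HarmonicOnNhd v {y | c < ⟪e, y⟫})
    (hvM : ∀ y, c < ⟪e, y⟫ → |v y| ≤ M) {x b : E} (hx : c' < ⟪e, x⟫) (hb : ‖b‖ = 1) :
    |fderiv ℝ v x b| ≤ Cconst (Module.finrank ℝ E) / (⟪e, x⟫ - c') * M := by
  have inner_shift : ∀ z : E, ⟪e, z + c' • e⟫ = ⟪e, z⟫ + c' := fun z => by
    rw [inner_add_right, real_inner_smul_right, real_inner_self_eq_norm_sq, he]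
    ring
  have shift_mem : ∀ z : E, 0 ≤ ⟪e, z⟫ → c < ⟪e, z + c' • e⟫ := fun z hz => by
    rw [inner_shift]
    linarith
  have inner_sub_shift : ⟪e, x - c' • e⟫ = ⟪e, x⟫ - c' := by
    rw [eq_sub_iff_add_eq, ← inner_shift, sub_add_cancel]
  have lineDeriv : HasDerivAt (fun s : ℝ => v (x + s • b)) (fderiv ℝ v x b) 0 :=
    ((hv x (hc.trans hx)).1.differentiableAt two_ne_zero).hasFDerivAt.hasLineDerivAt b
  rw [← inner_sub_shift]
  refine abs_deriv_le_of_continuousOn_halfSpace hE he (V := fun z => v (z + c' • e)) ?_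
    (fun z hz => ?_) (fun z hz => hvM _ (shift_mem z hz)) (by rwa [inner_sub_shift, sub_pos]) hb ?_
  · exact hv.contDiffOn.continuousOn.comp (by fun_prop) shift_mem
  · exact (hasSymmLaplacianAt_zero_of_harmonicAt (hv _ (shift_mem z hz.le))).comp_add_right
  · simpa only [sub_add_eq_add_sub, add_sub_cancel_right] using lineDeriv

lemma abs_fderiv_apply_le_of_harmonicOnNhd_halfSpace (hE : 2 ≤ Module.finrank ℝ E)
    (he : ‖e‖ = 1) {c : ℝ} {v : E → ℝ} (hv : InnerProductSpace.HarmonicOnNhd v {y | c < ⟪e, y⟫})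
    (hvM : ∀ y, c < ⟪e, y⟫ → |v y| ≤ M) {x b : E} (hx : c < ⟪e, x⟫) (hb : ‖b‖ = 1) :
    |fderiv ℝ v x b| ≤ Cconst (Module.finrank ℝ E) / (⟪e, x⟫ - c) * M := by
  have lim : Tendsto (fun c' : ℝ => Cconst (Module.finrank ℝ E) / (⟪e, x⟫ - c') * M) (𝓝[>] c)
      (𝓝 (Cconst (Module.finrank ℝ E) / (⟪e, x⟫ - c) * M)) :=
    ((tendsto_const_nhds.div (tendsto_const_nhds.sub tendsto_id)
      (sub_pos.2 hx).ne').mul_const M).mono_left nhdsWithin_le_nhds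
  refine ge_of_tendsto lim ?_
  filter_upwards [Ioo_mem_nhdsGT hx] with c' hc'
  exact abs_fderiv_apply_le_div_sub_of_harmonicOnNhd_halfSpace hE he hc'.1 hv hvM hc'.2 hb

variable {F : Type*} [NormedAddCommGroup F] [NormedSpace ℝ F]

theorem norm_fderiv_le_of_harmonicOnNhd_halfSpace (hE : 2 ≤ Module.finrank ℝ E)
    (he : ‖e‖ = 1) {c : ℝ} {u : E → F} (hu : InnerProductSpace.HarmonicOnNhd u {y | c < ⟪e, y⟫})
    (huM : ∀ y, c < ⟪e, y⟫ → ‖u y‖ ≤ M) {x : E} (hx : c < ⟪e, x⟫) :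
    ‖fderiv ℝ u x‖ ≤ Cconst (Module.finrank ℝ E) / (⟪e, x⟫ - c) * M := by
  have bound_nonneg : 0 ≤ Cconst (Module.finrank ℝ E) / (⟪e, x⟫ - c) * M :=
    mul_nonneg (div_nonneg (Cconst_nonneg hE) (sub_pos.2 hx).le)
      ((norm_nonneg _).trans (huM x hx))
  refine ContinuousLinearMap.opNorm_le_of_unit_norm bound_nonneg fun b hb => ?_
  obtain ⟨φ, hφ_norm, hφ⟩ := exists_dual_vector'' ℝ (fderiv ℝ u x b)
  have differentiableAt : DifferentiableAt ℝ u x := (hu x hx).1.differentiableAt two_ne_zero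
  have fderiv_dual_comp : fderiv ℝ (φ ∘ u) x b = ‖fderiv ℝ u x b‖ := by
    rw [fderiv_comp x φ.differentiableAt differentiableAt, φ.fderiv]
    exact hφ
  rw [← abs_norm, ← fderiv_dual_comp]
  exact abs_fderiv_apply_le_of_harmonicOnNhd_halfSpace hE he (hu.comp_CLM φ)
    (fun y hy => (φ.le_of_opNorm_le_of_le hφ_norm (huM y hy)).trans_eq (one_mul M)) hx hb

end HalfSpace

section ConvexComplement

lemma infDist_frontier_eq_infDist {E : Type*} [NormedAddCommGroup E] [NormedSpace ℝ E]
    [FiniteDimensional ℝ E] {K : Set E} (hK : IsClosed K) (hK_nonempty : K.Nonempty) {x : E}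
    (hx : x ∉ K) : infDist x (frontier K) = infDist x K := by
  obtain ⟨p, hp, hxp⟩ := exists_mem_frontier_infDist_compl_eq_dist (s := Kᶜ) hx
    (Set.compl_ne_univ.2 hK_nonempty)
  rw [frontier_compl] at hp
  rw [compl_compl] at hxp
  exact le_antisymm (hxp ▸ infDist_le_dist_of_mem hp)
    (infDist_le_infDist_of_subset hK.frontier_subset ⟨p, hp⟩)

variable {E : Type*} [NormedAddCommGroup E] [InnerProductSpace ℝ E] {K : Set E}

lemma exists_supporting_halfSpace (hK : IsComplete K) (hK_convex : Convex ℝ K)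
    (hK_nonempty : K.Nonempty) {x : E} (hx : x ∉ K) :
    ∃ (e : E) (c : ℝ), ‖e‖ = 1 ∧ (∀ y ∈ K, ⟪e, y⟫ ≤ c) ∧ ⟪e, x⟫ - c = infDist x K := by
  obtain ⟨p, hp, nearest⟩ := exists_norm_eq_iInf_of_complete_convex hK_nonempty hK hK_convex x
  have obtuse := (norm_eq_iInf_iff_real_inner_le_zero hK_convex hp).1 nearest
  have norm_pos : 0 < ‖x - p‖ := norm_sub_pos_iff.2 fun h => hx (h ▸ hp)
  refine ⟨‖x - p‖⁻¹ • (x - p), ⟪‖x - p‖⁻¹ • (x - p), p⟫, ?_, fun y hy => ?_, ?_⟩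
  · rw [norm_smul, norm_inv, norm_norm, inv_mul_cancel₀ norm_pos.ne']
  · rw [← sub_nonpos, ← inner_sub_right, real_inner_smul_left]
    exact mul_nonpos_of_nonneg_of_nonpos (by positivity) (obtuse y hy)
  · rw [← inner_sub_right, real_inner_smul_left, real_inner_self_eq_norm_sq, infDist_eq_iInf]
    simp only [dist_eq_norm, ← nearest]
    field_simp

theorem directional_derivative_bound_complement_convex_general [FiniteDimensional ℝ E]
    (hE : 2 ≤ Module.finrank ℝ E) (hK : IsClosed K) (hK_convex : Convex ℝ K)
    (hK_nonempty : K.Nonempty) {F : Type*} [NormedAddCommGroup F] [NormedSpace ℝ F] {u : E → F}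
    (hu : InnerProductSpace.HarmonicOnNhd u Kᶜ) {M : ℝ} (huM : ∀ y ∈ Kᶜ, ‖u y‖ ≤ M)
    {x : E} (hx : x ∈ Kᶜ) :
    ‖fderiv ℝ u x‖ ≤ Cconst (Module.finrank ℝ E) / infDist x (frontier K) * M := by
  obtain ⟨e, c, he, hc, dist_eq⟩ :=
    exists_supporting_halfSpace hK.isComplete hK_convex hK_nonempty hx
  have halfSpace_subset : {y | c < ⟪e, y⟫} ⊆ Kᶜ := fun y hy hyK => (hc y hyK).not_gt hy
  have hx_halfSpace : c < ⟪e, x⟫ :=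
    sub_pos.1 (dist_eq ▸ (hK.notMem_iff_infDist_pos hK_nonempty).1 hx)
  rw [infDist_frontier_eq_infDist hK hK_nonempty hx, ← dist_eq]
  exact norm_fderiv_le_of_harmonicOnNhd_halfSpace hE he (hu.mono halfSpace_subset)
    (fun y hy => huM y (halfSpace_subset hy)) hx_halfSpace

end ConvexComplement

section Components

variable {n m : ℕ} {Ω : Set (Eu n)}

lemma harmonicOnNhd_of_isHarmonicOn {v : Eu n → ℝ} (hΩ : IsOpen Ω) (hv : IsHarmonicOn v Ω) :
    InnerProductSpace.HarmonicOnNhd v Ω := by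
  have contDiffAt : ∀ y ∈ Ω, ContDiffAt ℝ 2 v y := fun y hy => hv.1.contDiffAt (hΩ.mem_nhds hy)
  refine fun x hx => ⟨contDiffAt x hx, ?_⟩
  filter_upwards [hΩ.mem_nhds hx] with y hy
  have fderiv_differentiableAt : DifferentiableAt ℝ (fderiv ℝ v) y :=
    ((contDiffAt y hy).fderiv_right (m := 1) le_rfl).differentiableAt one_ne_zero
  rw [InnerProductSpace.laplacian_eq_iteratedFDeriv_orthonormalBasis v
    (EuclideanSpace.basisFun (Fin n) ℝ), Pi.zero_apply, ← hv.2 y hy]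
  refine Finset.sum_congr rfl fun i _ => ?_
  rw [iteratedFDeriv_two_apply, fderiv_clm_apply fderiv_differentiableAt (by fun_prop)]
  simp

lemma harmonicOnNhd_of_isHarmonicOn_apply {u : Eu n → Eu m} (hΩ : IsOpen Ω)
    (hu : ∀ j, IsHarmonicOn (fun y => u y j) Ω) : InnerProductSpace.HarmonicOnNhd u Ω := by
  have contDiffAt : ∀ y ∈ Ω, ContDiffAt ℝ 2 u y := fun y hy =>
    contDiffAt_euclidean.2 fun j => (hu j).1.contDiffAt (hΩ.mem_nhds hy)
  refine fun x hx => ⟨contDiffAt x hx, ?_⟩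
  filter_upwards [hΩ.mem_nhds hx] with y hy
  ext j
  exact ((contDiffAt y hy).laplacian_CLM_comp_left (l := EuclideanSpace.proj j)).symm.trans
    (harmonicOnNhd_of_isHarmonicOn hΩ (hu j) y hy).2.self_of_nhds

end Components

/-- Let `n ≥ 2`, `m ≥ 1` and `Ω = ℝⁿ \ Ḡ` with `G` a convex domain
in `ℝⁿ`. If `u : Ω → ℝ^m` has bounded harmonic components (say `|u| ≤ M` on `Ω`),
then for every `x ∈ Ω` and every unit vector `ℓ`,
`|(ℓ,∇)u(x)| ≤ (C_n / d_x) · sup_Ω |u| ≤ (C_n / d_x) · M`. -/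
theorem directional_derivative_bound_complement_convex
    (n m : ℕ) (hn : 2 ≤ n) (hm : 1 ≤ m) (G Ω : Set (Eu n))
    (hGo : IsOpen G) (hGc : Convex ℝ G) (hGne : G.Nonempty)
    (hΩ : Ω = (closure G)ᶜ)
    (u : Eu n → Eu m) (hu : ∀ j : Fin m, IsHarmonicOn (fun y => u y j) Ω)
    (M : ℝ) (hM : ∀ y ∈ Ω, ‖u y‖ ≤ M)
    (x : Eu n) (hx : x ∈ Ω) (ℓ : Eu n) (hℓ : ‖ℓ‖ = 1) :
    ‖fderiv ℝ u x ℓ‖ ≤ Cconst n / Metric.infDist x (frontier Ω) * M := by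
  subst hΩ
  have harmonic := harmonicOnNhd_of_isHarmonicOn_apply isClosed_closure.isOpen_compl hu
  have bound := directional_derivative_bound_complement_convex_general
    (by rwa [finrank_euclideanSpace_fin]) isClosed_closure hGc.closure hGne.closure harmonic hM hx
  rw [finrank_euclideanSpace_fin, ← frontier_compl] at bound
  exact ((fderiv ℝ u x).unit_le_opNorm ℓ hℓ.le).trans bound
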